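/- Fix c₁, c₂ > 0 with c₁ ≠ c₂. There is a constant C (depending only on c₁, c₂) such that for all scalar u, v ∈ C₀^∞(ℝ×ℝ³) and all t ≥ 0: ∫_{ℝ³} |∂²u(t,x)| |∂v(t,x)| ⟨x⟩^{−1} dx ≤ C⟨t⟩^{−1}( Σ_{|α|≤1} ‖Γ^α u'(t,·)‖₂ + ‖⟨t+r⟩(∂_t² − c₁²Δ)u(t,·)‖₂ ) · ‖⟨x⟩^{−1} v'(t,·)‖₂ + C⟨t⟩^{−4/3}( Σ_{|α|≤1} ‖Γ^α u'(t,·)‖₂ + ‖⟨t+r⟩(∂_t² − c₁²Δ)u(t,·)‖₂ ) · ( Σ_{|α|≤1} ‖Γ^α v'(t,·)‖₂ + ‖⟨t+r⟩(∂_t² − c₂²Δ)v(t,·)‖₂ ), where |∂²u| denotes the sum of absolute values of all second space-time derivatives of u. -/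

import Mathlib

open MeasureTheory Real Finset

noncomputable section

/-- Points of space-time `ℝ×ℝ³`, written `X = (x₀,x₁,x₂,x₃)` with `x₀ = t`. -/
abbrev Pt : Type := Fin 4 → ℝ
/-- Points of space `ℝ³`. -/
abbrev Sp : Type := Fin 3 → ℝ

/-- Space-time partial derivative `∂_a`. -/
def pd (a : Fin 4) (u : Pt → ℝ) : Pt → ℝ := fun X => fderiv ℝ u X (Pi.single a 1)

/-- Rotation field `Ω_{ij} = x_i ∂_j - x_j ∂_i` (space-time indices). -/
def rot (i j : Fin 4) (u : Pt → ℝ) : Pt → ℝ := fun X => X i * pd j u X - X j * pd i u X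

/-- Scaling field `S = t ∂_t + x·∇_x = x^a ∂_a`. -/
def scal (u : Pt → ℝ) : Pt → ℝ := fun X => ∑ a, X a * pd a u X

/-- The eight vector fields `Γ = (∂, Ω, S)`. -/
def Gam : Fin 8 → (Pt → ℝ) → Pt → ℝ :=
  ![pd 0, pd 1, pd 2, pd 3, rot 1 2, rot 1 3, rot 2 3, scal]

/-- `Γ^α` for a multi-index `α` (a word in the eight fields) of length `m`. -/
def GamComp : ∀ {m : ℕ}, (Fin m → Fin 8) → (Pt → ℝ) → Pt → ℝ
  | 0, _, u => u
  | _ + 1, α, u => Gam (α 0) (GamComp (fun i => α i.succ) u)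

/-- Euclidean length `r = |x|` of a spatial point. -/
def rad (x : Sp) : ℝ := Real.sqrt (∑ i, (x i) ^ 2)

/-- Japanese bracket `⟨z⟩ = (1+z²)^{1/2}`. -/
def jb (z : ℝ) : ℝ := Real.sqrt (1 + z ^ 2)

/-- Euclidean norm `|∂u|` of the space-time gradient. -/
def gradNorm (u : Pt → ℝ) (X : Pt) : ℝ := Real.sqrt (∑ a, (pd a u X) ^ 2)

/-- The unit-speed d'Alembertian `□ = ∂_t² - Δ_x`. -/
def box1 (u : Pt → ℝ) : Pt → ℝ := fun X =>
  pd 0 (pd 0 u) X - ∑ j : Fin 3, pd j.succ (pd j.succ u) X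

/-- The d'Alembertian `∂_t² - c²Δ_x` with speed `c`. -/
def boxc (c : ℝ) (u : Pt → ℝ) : Pt → ℝ := fun X =>
  pd 0 (pd 0 u) X - c ^ 2 * ∑ j : Fin 3, pd j.succ (pd j.succ u) X

/-- The recurring right-hand factor
`Σ_{|α|≤1}‖Γ^α u'(t,·)‖₂ + ‖⟨t+r⟩(∂_t²-c²Δ)u(t,·)‖₂`. -/
def Qfac (cs : ℝ) (u : Pt → ℝ) (t : ℝ) : ℝ :=
  (∑ m ∈ Finset.range 2, ∑ α : Fin m → Fin 8,
      (∫ x : Sp, ∑ a, (GamComp α (pd a u) (Fin.cons t x)) ^ 2) ^ ((1:ℝ)/2))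
    + (∫ x : Sp, jb (t + rad x) ^ 2 * (boxc cs u (Fin.cons t x)) ^ 2) ^ ((1:ℝ)/2)

/-- `|∂²u|`: the sum of the absolute values of all second space-time derivatives. -/
def d2abs (u : Pt → ℝ) (X : Pt) : ℝ := ∑ a, ∑ b, |pd a (pd b u) X|


/-!
Write `σ² = θ²(1 + t² + r²)` with `θ = (c²t² - r²)/(1 + t² + r²)`, a weight comparable to
`⟨ct - r⟩²` that degenerates on the light cone of speed `c`. Klainerman and Sideris observed that
`S`, `Ω` and `∂_t² - c²Δ` algebraically determine `σΔu` and `σ∂∂_t u` up to bounded multiples of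
`Γu'`; integrating the divergence of `σ²(∂_j f ∂_i∂_j f - ∂_i f Δf)` over a time slice then controls
the full spatial Hessian, so `‖σ₁∂²u‖₂` is bounded by the right-hand factor for `u`.

Let `θ₂, σ₂` be those of speed `c₂`. For `v` one needs decay near the cone `r = c₁t` of `u`. Apply
the divergence theorem to `|∂v|²` times the radial field `θ₂² arctan((r² - c₁²t²)/⟨t⟩)/⟨t⟩ · x`:
the derivative of the arctangent is a Morawetz weight concentrated near `r = c₁t`, and the error
terms only involve `|∂v|² + σ₂²|∂²v|²`, with a factor `⟨t⟩^{-1}`. Since `c₁ ≠ c₂`, `θ₂` is bounded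
below near `r = c₁t`, so that `⟨t⟩² ≲ (1 + σ₁²)(1 + ⟨x⟩² · Morawetz weight)` everywhere, and one
Cauchy–Schwarz inequality gives the estimate, even with `⟨t⟩^{-3/2}` in place of `⟨t⟩^{-4/3}`.
-/
section CompactSupport

variable {X : Type*} [TopologicalSpace X] {f g : X → ℝ}

/-- Membership in `C_c(X)`: `f` is continuous with compact support. Every integrand below is of this
kind, which settles all integrability questions. -/
structure IsCc (f : X → ℝ) : Prop where
  continuous : Continuous f
  hasCompactSupport : HasCompactSupport f

namespace IsCc

theorem comp_left (hf : IsCc f) {φ : ℝ → ℝ} (hφ : Continuous φ) (hφ₀ : φ 0 = 0) :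
    IsCc fun x => φ (f x) :=
  ⟨hφ.comp hf.continuous, hf.hasCompactSupport.comp_left hφ₀⟩

theorem sq (hf : IsCc f) : IsCc fun x => f x ^ 2 :=
  hf.comp_left (continuous_pow 2) (zero_pow two_ne_zero)

theorem abs (hf : IsCc f) : IsCc fun x => |f x| :=
  hf.comp_left continuous_abs abs_zero

theorem sqrt (hf : IsCc f) : IsCc fun x => √(f x) :=
  hf.comp_left Real.continuous_sqrt Real.sqrt_zero

theorem mul_left (hf : IsCc f) (hg : Continuous g) : IsCc fun x => g x * f x :=
  ⟨hg.mul hf.continuous, hf.hasCompactSupport.mul_left⟩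

theorem mul_right (hf : IsCc f) (hg : Continuous g) : IsCc fun x => f x * g x :=
  ⟨hf.continuous.mul hg, hf.hasCompactSupport.mul_right⟩

theorem add (hf : IsCc f) (hg : IsCc g) : IsCc fun x => f x + g x :=
  ⟨hf.continuous.add hg.continuous, hf.hasCompactSupport.add hg.hasCompactSupport⟩

theorem sub (hf : IsCc f) (hg : IsCc g) : IsCc fun x => f x - g x :=
  ⟨hf.continuous.sub hg.continuous, hf.hasCompactSupport.sub hg.hasCompactSupport⟩

theorem sum {κ : Type*} [Fintype κ] {F : κ → X → ℝ} (hF : ∀ k, IsCc (F k)) :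
    IsCc fun x => ∑ k, F k x := by
  classical
  have zero : IsCc fun _ : X => (0 : ℝ) := ⟨continuous_const, HasCompactSupport.zero⟩
  induction (univ : Finset κ) using Finset.induction_on with
  | empty => simpa only [sum_empty] using zero
  | insert k s hk ih => simpa only [sum_insert hk] using (hF k).add ih

theorem comp_isClosedEmbedding {Y : Type*} [TopologicalSpace Y] (hf : IsCc f) {e : Y → X}
    (he : Topology.IsClosedEmbedding e) : IsCc fun y => f (e y) :=
  ⟨hf.continuous.comp he.continuous, hf.hasCompactSupport.comp_isClosedEmbedding he⟩

variable [MeasurableSpace X] [OpensMeasurableSpace X] {μ : Measure X} [IsFiniteMeasureOnCompacts μ]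

theorem integrable (hf : IsCc f) : Integrable f μ :=
  hf.continuous.integrable_of_hasCompactSupport hf.hasCompactSupport

theorem integral_mul_le_sqrt_mul_sqrt (hf : IsCc f) (hg : IsCc g) (hf₀ : 0 ≤ f) (hg₀ : 0 ≤ g) :
    ∫ x, f x * g x ∂μ ≤ √(∫ x, f x ^ 2 ∂μ) * √(∫ x, g x ^ 2 ∂μ) := by
  simpa [Real.sqrt_eq_rpow] using
    integral_mul_le_Lp_mul_Lq_of_nonneg (μ := μ) Real.HolderConjugate.two_two (ae_of_all _ hf₀)
      (ae_of_all _ hg₀)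
      (hf.continuous.memLp_of_hasCompactSupport hf.hasCompactSupport)
      (hg.continuous.memLp_of_hasCompactSupport hg.hasCompactSupport)

end IsCc

end CompactSupport

section PartialDerivatives

variable {n : ℕ} {f g : (Fin n → ℝ) → ℝ} {x : Fin n → ℝ}

/-- The partial derivative `∂_i f` of a function on `ℝⁿ`; for `n = 4` it is `pd i f` by `rfl`. -/
def partialDeriv (i : Fin n) (f : (Fin n → ℝ) → ℝ) : (Fin n → ℝ) → ℝ :=
  fun x => fderiv ℝ f x (Pi.single i 1)

/-- The squared Euclidean length `|∂f|²` of the gradient. -/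
def gradSq (f : (Fin n → ℝ) → ℝ) (x : Fin n → ℝ) : ℝ := ∑ i, partialDeriv i f x ^ 2

/-- The squared Hilbert–Schmidt norm `|∂²f|²` of the Hessian. -/
def hessSq (f : (Fin n → ℝ) → ℝ) (x : Fin n → ℝ) : ℝ :=
  ∑ i, ∑ j, partialDeriv i (partialDeriv j f) x ^ 2

/-- The Laplacian on `ℝⁿ`. -/
def lap (f : (Fin n → ℝ) → ℝ) (x : Fin n → ℝ) : ℝ := ∑ j, partialDeriv j (partialDeriv j f) x

theorem gradSq_nonneg : 0 ≤ gradSq f x := sum_nonneg fun _ _ => sq_nonneg _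

theorem hessSq_nonneg : 0 ≤ hessSq f x :=
  sum_nonneg fun _ _ => sum_nonneg fun _ _ => sq_nonneg _

theorem contDiff_partialDeriv {k m : WithTop ℕ∞} (hf : ContDiff ℝ m f) (h : k + 1 ≤ m) (i : Fin n) :
    ContDiff ℝ k (partialDeriv i f) :=
  (hf.fderiv_right h).clm_apply contDiff_const

theorem hasCompactSupport_partialDeriv (hf : HasCompactSupport f) (i : Fin n) :
    HasCompactSupport (partialDeriv i f) :=
  hf.fderiv_apply ℝ _

theorem isCc_partialDeriv (hf : ContDiff ℝ 1 f) (hfc : HasCompactSupport f) (i : Fin n) :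
    IsCc (partialDeriv i f) :=
  ⟨(contDiff_partialDeriv (k := 0) hf (by norm_num) i).continuous,
    hasCompactSupport_partialDeriv hfc i⟩

theorem isCc_gradSq (hf : ContDiff ℝ 1 f) (hfc : HasCompactSupport f) : IsCc (gradSq f) :=
  IsCc.sum fun i => (isCc_partialDeriv hf hfc i).sq

theorem isCc_partialDeriv₂ (hf : ContDiff ℝ 2 f) (hfc : HasCompactSupport f) (i j : Fin n) :
    IsCc (partialDeriv i (partialDeriv j f)) :=
  isCc_partialDeriv (contDiff_partialDeriv hf (by norm_num) j)
    (hasCompactSupport_partialDeriv hfc j) i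

theorem isCc_hessSq (hf : ContDiff ℝ 2 f) (hfc : HasCompactSupport f) : IsCc (hessSq f) :=
  IsCc.sum fun i => IsCc.sum fun j => (isCc_partialDeriv₂ hf hfc i j).sq

theorem isCc_lap (hf : ContDiff ℝ 2 f) (hfc : HasCompactSupport f) : IsCc (lap f) :=
  IsCc.sum fun j => isCc_partialDeriv₂ hf hfc j j

theorem partialDeriv_comm (hf : ContDiff ℝ 2 f) (i j : Fin n) :
    partialDeriv i (partialDeriv j f) = partialDeriv j (partialDeriv i f) := by
  have hdiff : Differentiable ℝ (fderiv ℝ f) :=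
    (hf.fderiv_right (m := 1) (by norm_num)).differentiable one_ne_zero
  have second_deriv (k l : Fin n) (x : Fin n → ℝ) : partialDeriv k (partialDeriv l f) x =
      fderiv ℝ (fderiv ℝ f) x (Pi.single k 1) (Pi.single l 1) := by
    unfold partialDeriv
    rw [fderiv_clm_apply (hdiff x) (by fun_prop)]
    simp
  funext x
  rw [second_deriv, second_deriv]
  exact (hf.contDiffAt.isSymmSndFDerivAt (by simp)) _ _

theorem partialDeriv_mul (hf : DifferentiableAt ℝ f x) (hg : DifferentiableAt ℝ g x) (i : Fin n) :
    partialDeriv i (fun y => f y * g y) x =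
      partialDeriv i f x * g x + f x * partialDeriv i g x := by
  simp only [partialDeriv, fderiv_fun_mul hf hg, add_apply,
    smul_apply, smul_eq_mul]
  ring

theorem partialDeriv_sub (hf : DifferentiableAt ℝ f x) (hg : DifferentiableAt ℝ g x) (i : Fin n) :
    partialDeriv i (fun y => f y - g y) x = partialDeriv i f x - partialDeriv i g x := by
  simp only [partialDeriv, fderiv_fun_sub hf hg, sub_apply]

theorem partialDeriv_sum {κ : Type*} [Fintype κ] {F : κ → (Fin n → ℝ) → ℝ}
    (hF : ∀ k, DifferentiableAt ℝ (F k) x) (i : Fin n) :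
    partialDeriv i (fun y => ∑ k, F k y) x = ∑ k, partialDeriv i (F k) x := by
  simp only [partialDeriv, fderiv_fun_sum fun k _ => hF k, _root_.sum_apply]

theorem partialDeriv_coord (i j : Fin n) :
    partialDeriv i (fun y => y j) x = if i = j then 1 else 0 := by
  have hderiv : fderiv ℝ (fun y : Fin n → ℝ => y j) x = ContinuousLinearMap.proj j :=
    (hasFDerivAt_apply j x).fderiv
  simp [partialDeriv, hderiv, Pi.single_apply, eq_comm]

theorem partialDeriv_comp {φ : ℝ → ℝ} {φ' : ℝ} (hφ : HasDerivAt φ φ' (f x))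
    (hf : DifferentiableAt ℝ f x) (i : Fin n) :
    partialDeriv i (fun y => φ (f y)) x = φ' * partialDeriv i f x := by
  have := (hφ.comp_hasFDerivAt x hf.hasFDerivAt).fderiv
  simp only [Function.comp_def] at this
  simp [partialDeriv, this]

theorem sum_partialDeriv_mul {V : Fin n → (Fin n → ℝ) → ℝ} (hf : DifferentiableAt ℝ f x)
    (hV : ∀ i, DifferentiableAt ℝ (V i) x) :
    ∑ i, partialDeriv i (fun y => f y * V i y) x =
      ∑ i, partialDeriv i f x * V i x + f x * ∑ i, partialDeriv i (V i) x := by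
  simp only [partialDeriv_mul hf (hV _), sum_add_distrib, mul_sum]

theorem integral_partialDeriv_eq_zero (hf : ContDiff ℝ 1 f) (hfc : HasCompactSupport f)
    (i : Fin n) : ∫ x, partialDeriv i f x = 0 := by
  have by_parts := integral_mul_fderiv_eq_neg_fderiv_mul_of_integrable (μ := volume)
    (f := fun _ : Fin n → ℝ => (1 : ℝ)) (g := f) (v := Pi.single i 1) (by simp)
    (by simpa using! (isCc_partialDeriv hf hfc i).integrable)
    (by simpa using (IsCc.mk hf.continuous hfc).integrable)
    (fun x _ => differentiableAt_const _) (fun x _ => hf.differentiable one_ne_zero x)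
  simpa [partialDeriv] using by_parts

theorem integral_le_integral_of_le_mul_divergence_add {F : Fin n → (Fin n → ℝ) → ℝ}
    (hF : ∀ i, ContDiff ℝ 1 (F i)) (hFc : ∀ i, HasCompactSupport (F i)) (hf : IsCc f)
    (hg : IsCc g) {c : ℝ} (h : ∀ x, f x ≤ c * ∑ i, partialDeriv i (F i) x + g x) :
    ∫ x, f x ≤ ∫ x, g x := by
  have hdiv := IsCc.sum fun i => isCc_partialDeriv (hF i) (hFc i) i
  calc ∫ x, f x ≤ ∫ x, (c * ∑ i, partialDeriv i (F i) x + g x) :=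
        integral_mono hf.integrable ((hdiv.integrable.const_mul c).add hg.integrable) h
    _ = c * (∑ i, ∫ x, partialDeriv i (F i) x) + ∫ x, g x := by
        rw [integral_add (hdiv.integrable.const_mul c) hg.integrable, integral_const_mul,
          integral_finsetSum _ fun i _ => (isCc_partialDeriv (hF i) (hFc i) i).integrable]
    _ = ∫ x, g x := by simp [integral_partialDeriv_eq_zero (hF _) (hFc _)]

end PartialDerivatives

section WeightedHessian

theorem sq_sum_sum_mul_le {κ κ' : Type*} [Fintype κ] [Fintype κ'] (a : κ → ℝ) (b : κ' → ℝ)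
    (h : κ → κ' → ℝ) :
    (∑ i, ∑ j, a i * b j * h i j) ^ 2 ≤ ((∑ i, a i ^ 2) * ∑ j, b j ^ 2) * ∑ i, ∑ j, h i j ^ 2 := by
  simpa only [sum_mul_sum, ← Fintype.sum_prod_type', mul_pow] using
    sum_mul_sq_le_sq_mul_sq univ (fun p : κ × κ' => a p.1 * b p.2) fun p => h p.1 p.2

variable {n : ℕ} {s f : (Fin n → ℝ) → ℝ} {x : Fin n → ℝ}

/-- The vector field `∑ⱼ ∂_j f ∂_i∂_j f - ∂_i f Δf`, whose divergence is `|∂²f|² - (Δf)²`. -/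
def hessField (f : (Fin n → ℝ) → ℝ) (i : Fin n) (x : Fin n → ℝ) : ℝ :=
  ∑ j, partialDeriv j f x * partialDeriv i (partialDeriv j f) x - partialDeriv i f x * lap f x

theorem contDiff_lap (hf : ContDiff ℝ 3 f) : ContDiff ℝ 1 (lap f) :=
  ContDiff.sum fun j _ => contDiff_partialDeriv
    (contDiff_partialDeriv (k := 2) hf (by norm_num) j) (by norm_num) j

theorem contDiff_hessField (hf : ContDiff ℝ 3 f) (i : Fin n) : ContDiff ℝ 1 (hessField f i) := by
  have hp (j) : ContDiff ℝ 2 (partialDeriv j f) := contDiff_partialDeriv hf (by norm_num) j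
  have hh (j) : ContDiff ℝ 1 (partialDeriv i (partialDeriv j f)) :=
    contDiff_partialDeriv (hp j) (by norm_num) i
  exact (ContDiff.sum fun j _ => ((hp j).of_le (by norm_num)).mul (hh j)).sub
    (((hp i).of_le (by norm_num)).mul (contDiff_lap hf))

theorem isCc_hessField (hf : ContDiff ℝ 2 f) (hfc : HasCompactSupport f) (i : Fin n) :
    IsCc (hessField f i) := by
  have hp (j) : IsCc (partialDeriv j f) := isCc_partialDeriv (hf.of_le (by norm_num)) hfc j
  exact (IsCc.sum fun j => (hp j).mul_right (isCc_partialDeriv₂ hf hfc i j).continuous).sub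
    ((hp i).mul_right (isCc_lap hf hfc).continuous)

theorem partialDeriv_lap (hf : ContDiff ℝ 3 f) (j : Fin n) :
    partialDeriv j (lap f) x = ∑ i, partialDeriv i (partialDeriv i (partialDeriv j f)) x := by
  have hp (i) : ContDiff ℝ 2 (partialDeriv i f) := contDiff_partialDeriv hf (by norm_num) i
  have hh (i) : DifferentiableAt ℝ (partialDeriv i (partialDeriv i f)) x :=
    (contDiff_partialDeriv (k := 1) (hp i) (by norm_num) i).differentiable one_ne_zero x
  calc partialDeriv j (lap f) x = ∑ i, partialDeriv j (partialDeriv i (partialDeriv i f)) x :=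
        partialDeriv_sum hh j
    _ = ∑ i, partialDeriv i (partialDeriv i (partialDeriv j f)) x :=
        sum_congr rfl fun i _ => by
          rw [partialDeriv_comm (hp i), partialDeriv_comm (hf.of_le (by norm_num)) j i]

theorem sum_partialDeriv_hessField (hf : ContDiff ℝ 3 f) :
    ∑ i, partialDeriv i (hessField f i) x = hessSq f x - lap f x ^ 2 := by
  have hp (j) : ContDiff ℝ 2 (partialDeriv j f) := contDiff_partialDeriv hf (by norm_num) j
  have hp' (j) : DifferentiableAt ℝ (partialDeriv j f) x := (hp j).differentiable two_ne_zero x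
  have hh (i j) : DifferentiableAt ℝ (partialDeriv i (partialDeriv j f)) x :=
    (contDiff_partialDeriv (k := 1) (hp j) (by norm_num) i).differentiable one_ne_zero x
  have hL : DifferentiableAt ℝ (lap f) x := (contDiff_lap hf).differentiable one_ne_zero x
  have expand (i) : partialDeriv i (hessField f i) x =
      ∑ j, (partialDeriv i (partialDeriv j f) x ^ 2 +
          partialDeriv j f x * partialDeriv i (partialDeriv i (partialDeriv j f)) x) -
        (partialDeriv i (partialDeriv i f) x * lap f x +
          partialDeriv i f x * partialDeriv i (lap f) x) := by
    unfold hessField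
    rw [partialDeriv_sub (.fun_sum fun j _ => (hp' j).fun_mul (hh i j)) ((hp' i).fun_mul hL),
      partialDeriv_sum fun j => (hp' j).fun_mul (hh i j), partialDeriv_mul (hp' i) hL]
    simp only [partialDeriv_mul (hp' _) (hh _ _), sq]
  have third_order : ∑ i, ∑ j, partialDeriv j f x *
        partialDeriv i (partialDeriv i (partialDeriv j f)) x =
      ∑ j, partialDeriv j f x * partialDeriv j (lap f) x := by
    rw [sum_comm]
    simp only [partialDeriv_lap hf, mul_sum]
  simp only [expand, sum_sub_distrib, sum_add_distrib, third_order, ← sum_mul]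
  change hessSq f x + _ - (lap f x * lap f x + _) = _
  ring

theorem mul_hessSq_le_divergence {k : ℝ} (hs : DifferentiableAt ℝ s x) (hs₀ : 0 ≤ s x)
    (hk₀ : 0 ≤ k) (hk : gradSq s x ≤ k * s x) (hf : ContDiff ℝ 3 f) :
    s x * hessSq f x ≤ 2 * ∑ i, partialDeriv i (fun y => s y * hessField f i y) x +
      (3 * (s x * lap f x ^ 2) + 2 * k * gradSq f x) := by
  have hsH : 0 ≤ s x * hessSq f x := mul_nonneg hs₀ hessSq_nonneg
  have hkP : 0 ≤ k * gradSq f x := mul_nonneg hk₀ gradSq_nonneg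
  have hsL : 0 ≤ s x * lap f x ^ 2 := mul_nonneg hs₀ (sq_nonneg _)
  set A := ∑ i, ∑ j, partialDeriv i s x * partialDeriv j f x * partialDeriv i (partialDeriv j f) x
  set B := ∑ i, partialDeriv i s x * partialDeriv i f x
  have div_eq : ∑ i, partialDeriv i (fun y => s y * hessField f i y) x =
      A - B * lap f x + s x * (hessSq f x - lap f x ^ 2) := by
    have hV (i) := (contDiff_hessField hf i).differentiable one_ne_zero x
    rw [sum_partialDeriv_mul hs hV, sum_partialDeriv_hessField hf]
    simp only [hessField, A, B, mul_sub, mul_sum, sum_sub_distrib, sum_mul, mul_assoc]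
  have hA : 2 * -A ≤ s x * hessSq f x + k * gradSq f x := by
    refine two_mul_le_add_of_sq_le_mul hsH hkP ?_
    calc (-A) ^ 2 = A ^ 2 := neg_sq A
      _ ≤ gradSq s x * gradSq f x * hessSq f x := sq_sum_sum_mul_le _ _ _
      _ ≤ k * s x * gradSq f x * hessSq f x := by
          gcongr
          exacts [hessSq_nonneg, gradSq_nonneg]
      _ = s x * hessSq f x * (k * gradSq f x) := by ring
  have hB : 2 * (B * lap f x) ≤ s x * lap f x ^ 2 + k * gradSq f x := by
    refine two_mul_le_add_of_sq_le_mul hsL hkP ?_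
    calc (B * lap f x) ^ 2 = B ^ 2 * lap f x ^ 2 := mul_pow ..
      _ ≤ gradSq s x * gradSq f x * lap f x ^ 2 := by
          gcongr
          exact sum_mul_sq_le_sq_mul_sq _ _ _
      _ ≤ k * s x * gradSq f x * lap f x ^ 2 := by
          gcongr
          exact gradSq_nonneg
      _ = s x * lap f x ^ 2 * (k * gradSq f x) := by ring
  rw [div_eq]
  linarith

theorem integral_mul_hessSq_le {k : ℝ} (hs : ContDiff ℝ 1 s) (hs₀ : ∀ x, 0 ≤ s x) (hk₀ : 0 ≤ k)
    (hk : ∀ x, gradSq s x ≤ k * s x) (hf : ContDiff ℝ 3 f) (hfc : HasCompactSupport f) :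
    ∫ x, s x * hessSq f x ≤ ∫ x, (3 * (s x * lap f x ^ 2) + 2 * k * gradSq f x) := by
  have hf₂ : ContDiff ℝ 2 f := hf.of_le (by norm_num)
  have hf₁ : ContDiff ℝ 1 f := hf.of_le (by norm_num)
  refine integral_le_integral_of_le_mul_divergence_add
    (fun i => hs.mul (contDiff_hessField hf i))
    (fun i => ((isCc_hessField hf₂ hfc i).mul_left hs.continuous).hasCompactSupport)
    ((isCc_hessSq hf₂ hfc).mul_left hs.continuous)
    ((((isCc_lap hf₂ hfc).sq.mul_left hs.continuous).mul_left continuous_const).add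
      ((isCc_gradSq hf₁ hfc).mul_left continuous_const)) (c := 2) fun x => ?_
  exact mul_hessSq_le_divergence (hs.differentiable one_ne_zero x) (hs₀ x) hk₀ (hk x) hf

end WeightedHessian

section RadialFunctions

variable {n : ℕ} {x : Fin n → ℝ}

/-- The squared Euclidean length `|x|²`; the norm of `Fin n → ℝ` is the sup norm. -/
def rsq (x : Fin n → ℝ) : ℝ := ∑ i, x i ^ 2

theorem rsq_nonneg : 0 ≤ rsq x := sum_nonneg fun _ _ => sq_nonneg _

theorem contDiff_rsq {m : WithTop ℕ∞} : ContDiff ℝ m (rsq : (Fin n → ℝ) → ℝ) :=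
  ContDiff.sum fun i _ => (contDiff_apply ℝ ℝ i).pow 2

theorem partialDeriv_rsq (i : Fin n) : partialDeriv i rsq x = 2 * x i := by
  have hcoord (j : Fin n) : DifferentiableAt ℝ (fun y : Fin n → ℝ => y j) x :=
    differentiableAt_apply j x
  have rsq_eq : rsq = fun y : Fin n → ℝ => ∑ j, y j * y j := by
    funext y
    simp only [rsq, sq]
  rw [rsq_eq, partialDeriv_sum fun j => (hcoord j).fun_mul (hcoord j)]
  simp only [partialDeriv_mul (hcoord _) (hcoord _), partialDeriv_coord]
  simp [sum_add_distrib, two_mul]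

theorem partialDeriv_comp_rsq {φ : ℝ → ℝ} {φ' : ℝ} (hφ : HasDerivAt φ φ' (rsq x)) (i : Fin n) :
    partialDeriv i (fun y => φ (rsq y)) x = φ' * (2 * x i) := by
  rw [partialDeriv_comp hφ (contDiff_rsq.differentiable one_ne_zero x), partialDeriv_rsq]

theorem gradSq_comp_rsq {φ : ℝ → ℝ} {φ' : ℝ} (hφ : HasDerivAt φ φ' (rsq x)) :
    gradSq (fun y => φ (rsq y)) x = 4 * rsq x * φ' ^ 2 := by
  simp only [gradSq, partialDeriv_comp_rsq hφ, mul_pow, ← mul_sum, ← rsq.eq_1]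
  ring

theorem sum_partialDeriv_comp_rsq_mul_sq_mul_coord {φ : ℝ → ℝ} {φ' : ℝ}
    (hφ : HasDerivAt φ φ' (rsq x)) {w : (Fin n → ℝ) → ℝ} (hw : DifferentiableAt ℝ w x) :
    ∑ i, partialDeriv i (fun y => φ (rsq y) * w y ^ 2 * y i) x =
      (2 * rsq x * φ' + n * φ (rsq x)) * w x ^ 2 +
        2 * φ (rsq x) * w x * ∑ i, x i * partialDeriv i w x := by
  have hφr : DifferentiableAt ℝ (fun y => φ (rsq y)) x :=
    hφ.differentiableAt.comp x (contDiff_rsq.differentiable one_ne_zero x)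
  have deriv_mul_coord (i : Fin n) :
      partialDeriv i (fun y => φ (rsq y) * w y ^ 2) x * x i =
        2 * φ' * w x ^ 2 * x i ^ 2 + 2 * φ (rsq x) * w x * (x i * partialDeriv i w x) := by
    rw [partialDeriv_mul hφr (hw.fun_pow 2), partialDeriv_comp_rsq hφ,
      partialDeriv_comp (hasDerivAt_pow 2 (w x)) hw]
    ring
  rw [sum_partialDeriv_mul (hφr.fun_mul (hw.fun_pow 2)) fun i => differentiableAt_apply i x]
  simp only [deriv_mul_coord, sum_add_distrib, ← mul_sum, ← rsq.eq_1, partialDeriv_coord]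
  simp only [if_true, sum_const, card_univ, Fintype.card_fin, nsmul_eq_mul]
  ring

end RadialFunctions

section ConeWeight

variable {c t r : ℝ}

/-- The function `θ = (c²t² - r)/(1 + t² + r)` of the squared radius `r = |x|²`. It is bounded
and vanishes exactly on the light cone `|x| = c|t|` of speed `c`. -/
def coneRatio (c t r : ℝ) : ℝ := (c ^ 2 * t ^ 2 - r) / (1 + t ^ 2 + r)

/-- The weight `θ²(1 + t² + r) = (c²t² - r)²/(1 + t² + r)`, with `r = |x|²`, which is comparable to
`(c|t| - |x|)²` away from the origin. -/
def coneWeight (c t r : ℝ) : ℝ := coneRatio c t r ^ 2 * (1 + t ^ 2 + r)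

theorem one_add_coneRatio_nonneg (hr : 0 ≤ r) : 0 ≤ 1 + coneRatio c t r := by
  have : 1 + coneRatio c t r = (1 + (c ^ 2 + 1) * t ^ 2) / (1 + t ^ 2 + r) := by
    unfold coneRatio
    field_simp
    ring
  rw [this]
  positivity

theorem coneRatio_le (hr : 0 ≤ r) : coneRatio c t r ≤ c ^ 2 := by
  rw [coneRatio, div_le_iff₀ (by positivity)]
  nlinarith [sq_nonneg c, mul_nonneg (sq_nonneg c) hr]

theorem abs_coneRatio_le (hr : 0 ≤ r) : |coneRatio c t r| ≤ 1 + c ^ 2 :=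
  abs_le.2 ⟨by linarith [one_add_coneRatio_nonneg (c := c) (t := t) hr, sq_nonneg c],
    by linarith [coneRatio_le (c := c) (t := t) hr]⟩

theorem coneRatio_sq_le (hr : 0 ≤ r) : coneRatio c t r ^ 2 ≤ (1 + c ^ 2) ^ 2 :=
  sq_le_sq.2 ((abs_coneRatio_le hr).trans (le_abs_self _))

theorem hasDerivAt_coneRatio (hr : 0 ≤ r) :
    HasDerivAt (coneRatio c t) (-(1 + coneRatio c t r) / (1 + t ^ 2 + r)) r := by
  have hJ : 1 + t ^ 2 + r ≠ 0 := by positivity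
  refine (((hasDerivAt_id' r).const_sub _).fun_div
    ((hasDerivAt_id' r).const_add _) hJ).congr_deriv ?_
  unfold coneRatio
  field_simp
  ring

theorem hasDerivAt_coneWeight (hr : 0 ≤ r) :
    HasDerivAt (coneWeight c t) (-(coneRatio c t r * (2 + coneRatio c t r))) r := by
  have hJ : 1 + t ^ 2 + r ≠ 0 := by positivity
  refine (((hasDerivAt_coneRatio hr).fun_pow 2).fun_mul
    ((hasDerivAt_id' r).const_add (1 + t ^ 2))).congr_deriv ?_
  field_simp
  ring

theorem contDiff_coneRatio_rsq {n : ℕ} {m : WithTop ℕ∞} (c t : ℝ) :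
    ContDiff ℝ m fun x : Fin n → ℝ => coneRatio c t (rsq x) :=
  (contDiff_const.sub contDiff_rsq).div (contDiff_const.add contDiff_rsq) fun _ =>
    (add_pos_of_pos_of_nonneg (by positivity) rsq_nonneg).ne'

theorem contDiff_coneWeight_rsq {n : ℕ} {m : WithTop ℕ∞} (c t : ℝ) :
    ContDiff ℝ m fun x : Fin n → ℝ => coneWeight c t (rsq x) :=
  ((contDiff_coneRatio_rsq c t).pow 2).mul (contDiff_const.add contDiff_rsq)

theorem coneWeight_nonneg (hr : 0 ≤ r) : 0 ≤ coneWeight c t r := by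
  unfold coneWeight
  positivity

theorem coneWeight_le (hr : 0 ≤ r) : coneWeight c t r ≤ (1 + c ^ 2) ^ 2 * (1 + t ^ 2 + r) := by
  exact mul_le_mul_of_nonneg_right (coneRatio_sq_le hr) (by positivity)

theorem coneWeight_mul (hr : 0 ≤ r) :
    coneWeight c t r * (1 + t ^ 2 + r) = (c ^ 2 * t ^ 2 - r) ^ 2 := by
  have hJ : 1 + t ^ 2 + r ≠ 0 := by positivity
  unfold coneWeight coneRatio
  field_simp

theorem gradSq_coneWeight_le {n : ℕ} (x : Fin n → ℝ) :
    gradSq (fun y => coneWeight c t (rsq y)) x ≤ 4 * (3 + c ^ 2) ^ 2 * coneWeight c t (rsq x) := by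
  have hr := rsq_nonneg (x := x)
  have h₂ : (2 + coneRatio c t (rsq x)) ^ 2 ≤ (3 + c ^ 2) ^ 2 :=
    pow_le_pow_left₀ (by linarith [one_add_coneRatio_nonneg (c := c) (t := t) hr])
      (by linarith [coneRatio_le (c := c) (t := t) hr]) 2
  have hrJ : rsq x ≤ 1 + t ^ 2 + rsq x := by linarith [sq_nonneg t]
  rw [gradSq_comp_rsq (hasDerivAt_coneWeight hr), coneWeight]
  calc _ = 4 * (2 + coneRatio c t (rsq x)) ^ 2 * (coneRatio c t (rsq x) ^ 2 * rsq x) := by ring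
    _ ≤ _ := by gcongr

end ConeWeight

section Morawetz

variable {n : ℕ} {a c t T r : ℝ} {w : (Fin n → ℝ) → ℝ} {x : Fin n → ℝ}

/-- The radial Morawetz multiplier `θ² arctan((r - a)/T)/T`, as a function of `r = |x|²`. Its
derivative contains the positive density `θ²/(T² + (r - a)²)`, which is of size `θ²/T²` for
`|r - a| ≤ T`. -/
def morawetzMultiplier (c t a T r : ℝ) : ℝ := coneRatio c t r ^ 2 * arctan ((r - a) / T) / T

/-- The weight `θ²r/(T² + (r - a)²)` gained from `morawetzMultiplier`, with `r = |x|²`. -/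
def morawetzWeight (c t a T r : ℝ) : ℝ := coneRatio c t r ^ 2 * r / (T ^ 2 + (r - a) ^ 2)

theorem hasDerivAt_morawetzMultiplier (hT : 0 < T) (hr : 0 ≤ r) :
    HasDerivAt (morawetzMultiplier c t a T)
      (coneRatio c t r ^ 2 / (T ^ 2 + (r - a) ^ 2) - 2 * coneRatio c t r *
        (1 + coneRatio c t r) * arctan ((r - a) / T) / ((1 + t ^ 2 + r) * T)) r := by
  have hJ : 1 + t ^ 2 + r ≠ 0 := by positivity
  refine ((((hasDerivAt_coneRatio hr).fun_pow 2).fun_mul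
    (((hasDerivAt_id' r).sub_const a).div_const T).arctan).div_const T).congr_deriv ?_
  field_simp
  ring

theorem contDiff_morawetzMultiplier_rsq (c t a T : ℝ) :
    ContDiff ℝ 1 fun x : Fin n → ℝ => morawetzMultiplier c t a T (rsq x) :=
  (((contDiff_coneRatio_rsq c t).pow 2).mul
    ((contDiff_rsq.sub contDiff_const).div_const T).arctan).div_const T

theorem abs_arctan_le_two (y : ℝ) : |arctan y| ≤ 2 :=
  abs_le.2 ⟨by linarith [neg_pi_div_two_lt_arctan y, pi_le_four],
    by linarith [arctan_lt_pi_div_two y, pi_le_four]⟩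

theorem abs_morawetzMultiplier_le (hT : 0 < T) :
    |morawetzMultiplier c t a T r| ≤ 2 * coneRatio c t r ^ 2 / T := by
  rw [morawetzMultiplier, abs_div, abs_mul, abs_sq, abs_of_pos hT, mul_comm 2]
  gcongr
  exact abs_arctan_le_two _

theorem morawetzWeight_nonneg (hr : 0 ≤ r) : 0 ≤ morawetzWeight c t a T r := by
  unfold morawetzWeight
  positivity

theorem continuous_morawetzWeight_rsq (c t a : ℝ) (hT : 0 < T) :
    Continuous fun x : Fin n → ℝ => morawetzWeight c t a T (rsq x) :=
  ((((contDiff_coneRatio_rsq c t).pow 2).mul (contDiff_rsq (m := 0))).div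
    (contDiff_const.add ((contDiff_rsq.sub contDiff_const).pow 2))
    fun _ => by positivity).continuous

theorem two_mul_morawetzWeight_le (hT : 0 < T) (hr : 0 ≤ r) :
    2 * morawetzWeight c t a T r ≤
      2 * r * (coneRatio c t r ^ 2 / (T ^ 2 + (r - a) ^ 2) - 2 * coneRatio c t r *
        (1 + coneRatio c t r) * arctan ((r - a) / T) / ((1 + t ^ 2 + r) * T)) +
      8 * (1 + c ^ 2) ^ 2 / T := by
  set θ := coneRatio c t r
  set α := arctan ((r - a) / T)
  have hJ : 0 < 1 + t ^ 2 + r := by positivity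
  have hθ : |θ| ≤ 1 + c ^ 2 := abs_coneRatio_le hr
  have hθ' : |1 + θ| ≤ 1 + c ^ 2 := by
    rw [abs_of_nonneg (one_add_coneRatio_nonneg hr)]
    linarith [coneRatio_le (c := c) (t := t) hr]
  have hα : |α| ≤ 2 := abs_arctan_le_two _
  have error_le : r / (1 + t ^ 2 + r) * (θ * (1 + θ) * α) ≤ 2 * (1 + c ^ 2) ^ 2 :=
    calc r / (1 + t ^ 2 + r) * (θ * (1 + θ) * α)
        ≤ |r / (1 + t ^ 2 + r)| * (|θ| * |1 + θ| * |α|) := by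
          rw [← abs_mul, ← abs_mul, ← abs_mul]
          exact le_abs_self _
      _ ≤ 1 * ((1 + c ^ 2) * (1 + c ^ 2) * 2) := by
          gcongr
          rw [abs_of_nonneg (by positivity), div_le_one hJ]
          linarith [sq_nonneg t]
      _ = 2 * (1 + c ^ 2) ^ 2 := by ring
  calc 2 * morawetzWeight c t a T r
      = 2 * r * (θ ^ 2 / (T ^ 2 + (r - a) ^ 2) - 2 * θ * (1 + θ) * α / ((1 + t ^ 2 + r) * T)) +
          4 * (r / (1 + t ^ 2 + r) * (θ * (1 + θ) * α)) / T := by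
        unfold morawetzWeight
        field_simp
        ring
    _ ≤ _ + 4 * (2 * (1 + c ^ 2) ^ 2) / T := by gcongr
    _ = _ := by ring

theorem neg_morawetzMultiplier_mul_le (hT : 0 < T) :
    -(2 * morawetzMultiplier c t a T (rsq x) * w x * ∑ i, x i * partialDeriv i w x) ≤
      2 / T * ((1 + c ^ 2) ^ 2 * w x ^ 2 + coneWeight c t (rsq x) * gradSq w x) := by
  set θ := coneRatio c t (rsq x)
  set P := ∑ i, x i * partialDeriv i w x
  have hP : P ^ 2 ≤ rsq x * gradSq w x := sum_mul_sq_le_sq_mul_sq _ _ _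
  have hw : θ ^ 2 * w x ^ 2 ≤ (1 + c ^ 2) ^ 2 * w x ^ 2 :=
    mul_le_mul_of_nonneg_right (coneRatio_sq_le rsq_nonneg) (sq_nonneg _)
  have hs : θ ^ 2 * P ^ 2 ≤ coneWeight c t (rsq x) * gradSq w x :=
    calc θ ^ 2 * P ^ 2 ≤ θ ^ 2 * (rsq x * gradSq w x) := by gcongr
      _ ≤ θ ^ 2 * ((1 + t ^ 2 + rsq x) * gradSq w x) := by
          gcongr
          · exact gradSq_nonneg
          · linarith [sq_nonneg t]
      _ = coneWeight c t (rsq x) * gradSq w x := by rw [coneWeight]; ring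
  calc -(2 * morawetzMultiplier c t a T (rsq x) * w x * P)
      ≤ |2 * morawetzMultiplier c t a T (rsq x) * w x * P| := neg_le_abs _
    _ = |morawetzMultiplier c t a T (rsq x)| * (2 * |w x| * |P|) := by
        simp only [abs_mul, abs_two]
        ring
    _ ≤ 2 * θ ^ 2 / T * (|w x| ^ 2 + |P| ^ 2) := by
        gcongr
        · exact abs_morawetzMultiplier_le hT
        · exact two_mul_le_add_sq _ _
    _ = 2 / T * (θ ^ 2 * w x ^ 2 + θ ^ 2 * P ^ 2) := by
        rw [sq_abs, sq_abs]
        ring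
    _ ≤ _ := by gcongr

theorem two_mul_morawetzWeight_mul_sq_le_divergence (hT : 0 < T)
    (hw : DifferentiableAt ℝ w x) :
    2 * morawetzWeight c t a T (rsq x) * w x ^ 2 ≤
      ∑ i, partialDeriv i (fun y => morawetzMultiplier c t a T (rsq y) * w y ^ 2 * y i) x +
        (10 + 2 * n) * (1 + c ^ 2) ^ 2 / T *
          (w x ^ 2 + coneWeight c t (rsq x) * gradSq w x) := by
  have hr := rsq_nonneg (x := x)
  have hs : 0 ≤ coneWeight c t (rsq x) * gradSq w x :=
    mul_nonneg (coneWeight_nonneg hr) gradSq_nonneg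
  have gain := mul_le_mul_of_nonneg_right
    (two_mul_morawetzWeight_le (c := c) (t := t) (a := a) hT hr) (sq_nonneg (w x))
  have dim_term : -(morawetzMultiplier c t a T (rsq x)) ≤ 2 * (1 + c ^ 2) ^ 2 / T :=
    calc -(morawetzMultiplier c t a T (rsq x)) ≤ |morawetzMultiplier c t a T (rsq x)| :=
          neg_le_abs _
      _ ≤ 2 * coneRatio c t (rsq x) ^ 2 / T := abs_morawetzMultiplier_le hT
      _ ≤ _ := div_le_div_of_nonneg_right
          (mul_le_mul_of_nonneg_left (coneRatio_sq_le hr) zero_le_two) hT.le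
  have radial_term := neg_morawetzMultiplier_mul_le (c := c) (t := t) (a := a) (w := w) (x := x) hT
  have dim_term' := mul_le_mul_of_nonneg_left dim_term (by positivity : 0 ≤ n * w x ^ 2)
  have grad_coeff : 2 / T * (coneWeight c t (rsq x) * gradSq w x) ≤
      (10 + 2 * n) * (1 + c ^ 2) ^ 2 / T * (coneWeight c t (rsq x) * gradSq w x) := by
    gcongr
    nlinarith [sq_nonneg c]
  rw [sum_partialDeriv_comp_rsq_mul_sq_mul_coord (hasDerivAt_morawetzMultiplier hT hr) hw]
  linear_combination gain + dim_term' + radial_term + grad_coeff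

theorem integral_two_mul_morawetzWeight_mul_sq_le (c t a : ℝ) (hT : 0 < T) (hw : ContDiff ℝ 1 w)
    (hwc : HasCompactSupport w) :
    ∫ x, 2 * morawetzWeight c t a T (rsq x) * w x ^ 2 ≤
      ∫ x, (10 + 2 * n) * (1 + c ^ 2) ^ 2 / T *
        (w x ^ 2 + coneWeight c t (rsq x) * gradSq w x) := by
  have hw₂ : IsCc fun x => w x ^ 2 := IsCc.sq ⟨hw.continuous, hwc⟩
  have hm := contDiff_morawetzMultiplier_rsq (n := n) c t a T
  have hs := (contDiff_coneWeight_rsq (n := n) (m := 0) c t).continuous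
  refine integral_le_integral_of_le_mul_divergence_add
    (F := fun i x => morawetzMultiplier c t a T (rsq x) * w x ^ 2 * x i)
    (fun i => (hm.mul (hw.pow 2)).mul (contDiff_apply ℝ ℝ i))
    (fun i => ((hw₂.mul_left hm.continuous).mul_right (continuous_apply i)).hasCompactSupport)
    (hw₂.mul_left (continuous_const.mul (continuous_morawetzWeight_rsq c t a hT)))
    ((hw₂.add ((isCc_gradSq hw hwc).mul_left hs)).mul_left continuous_const)
    (c := 1) fun x => ?_
  rw [one_mul]
  exact two_mul_morawetzWeight_mul_sq_le_divergence hT (hw.differentiable one_ne_zero x)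

end Morawetz

section TwoCones

theorem jb_sq (z : ℝ) : jb z ^ 2 = 1 + z ^ 2 := sq_sqrt (by positivity)

theorem one_le_jb (z : ℝ) : 1 ≤ jb z := one_le_sqrt.2 (le_add_of_nonneg_right (sq_nonneg z))

theorem jb_pos (z : ℝ) : 0 < jb z := one_pos.trans_le (one_le_jb z)

theorem exists_separated_of_near_cone {a b : ℝ} (ha : 0 < a) (hab : a ≠ b) :
    ∃ δ > 0, ∀ τ r : ℝ, 1 ≤ τ → |a * τ - r| ≤ δ * (1 + τ + r) →
      δ * (1 + τ + r) ≤ r ∧ δ * (1 + τ + r) ≤ |b * τ - r| := by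
  have hg : 0 < min a |a - b| := lt_min ha (abs_pos.2 (sub_ne_zero.2 hab))
  have hK : 0 < 4 + 2 * a := by positivity
  have h2K : 0 < 2 * (4 + 2 * a) := mul_pos two_pos hK
  set δ := min (1 / 2) (min a |a - b| / (2 * (4 + 2 * a)))
  have hδ : 0 < δ := lt_min one_half_pos (div_pos hg h2K)
  have hδ_half : δ ≤ 1 / 2 := min_le_left _ _
  have hδK : 2 * δ * (4 + 2 * a) ≤ min a |a - b| := by
    linarith [(le_div_iff₀ h2K).1 (min_le_right (1 / 2) (min a |a - b| / (2 * (4 + 2 * a))))]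
  refine ⟨δ, hδ, fun τ r hτ hnear => ?_⟩
  have hJ : 1 + τ + r ≤ (4 + 2 * a) * τ := by
    rcases le_or_gt 0 (1 + τ + r) with h | h
    · nlinarith [(abs_le.1 hnear).1]
    · nlinarith
  have hδJ : 2 * (δ * (1 + τ + r)) ≤ min a |a - b| * τ :=
    calc 2 * (δ * (1 + τ + r)) = 2 * δ * (1 + τ + r) := by ring
      _ ≤ 2 * δ * ((4 + 2 * a) * τ) := by gcongr
      _ = 2 * δ * (4 + 2 * a) * τ := by ring
      _ ≤ min a |a - b| * τ := by gcongr
  have hmin_a : min a |a - b| * τ ≤ a * τ := by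
    gcongr
    exact min_le_left _ _
  have hmin_ab : min a |a - b| * τ ≤ |a * τ - r| + |b * τ - r| :=
    calc min a |a - b| * τ ≤ |a - b| * τ := by
          gcongr
          exact min_le_right _ _
      _ = |(a * τ - r) - (b * τ - r)| := by
          rw [sub_sub_sub_cancel_right, ← sub_mul, abs_mul, abs_of_nonneg (zero_le_one.trans hτ)]
      _ ≤ |a * τ - r| + |b * τ - r| := abs_sub _ _
  constructor
  · linarith [(abs_le.1 hnear).2]
  · linarith

theorem one_add_sq_le_of_far_from_cone {c δ t r : ℝ} (hδ : 0 < δ) (hr : 0 ≤ r)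
    (hfar : δ * (1 + t ^ 2 + r) ≤ |c ^ 2 * t ^ 2 - r|) :
    1 + t ^ 2 ≤ (δ ^ 2)⁻¹ * coneWeight c t r := by
  have hJ : 0 < 1 + t ^ 2 + r := by positivity
  have hθ : δ ≤ |coneRatio c t r| := by
    rwa [coneRatio, abs_div, abs_of_pos hJ, le_div_iff₀ hJ]
  rw [le_inv_mul_iff₀ (by positivity), coneWeight, ← sq_abs (coneRatio c t r)]
  exact mul_le_mul (pow_le_pow_left₀ hδ.le hθ 2) (by linarith) (by positivity) (sq_nonneg _)

theorem one_add_sq_le_of_near_cone {c₁ c₂ δ t r : ℝ} (hδ : 0 < δ) (hr : 0 ≤ r)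
    (hδr : δ * (1 + t ^ 2 + r) ≤ r) (hfar : δ * (1 + t ^ 2 + r) ≤ |c₂ ^ 2 * t ^ 2 - r|) :
    1 + t ^ 2 ≤ (δ ^ 4)⁻¹ * ((1 + coneWeight c₁ t r) *
      (morawetzWeight c₂ t (c₁ ^ 2 * t ^ 2) (jb t) r * (1 + r))) := by
  have hJ : 0 < 1 + t ^ 2 + r := by positivity
  have hJ_ge : 1 + t ^ 2 ≤ 1 + t ^ 2 + r := le_add_of_nonneg_right hr
  have hs := coneWeight_nonneg (c := c₁) (t := t) hr
  have hθ : δ ≤ |coneRatio c₂ t r| := by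
    rwa [coneRatio, abs_div, abs_of_pos hJ, le_div_iff₀ hJ]
  have hD : 0 < jb t ^ 2 + (r - c₁ ^ 2 * t ^ 2) ^ 2 := by
    rw [jb_sq]
    positivity
  have hD_le : jb t ^ 2 + (r - c₁ ^ 2 * t ^ 2) ^ 2 ≤
      (1 + t ^ 2 + r) * (1 + coneWeight c₁ t r) := by
    rw [jb_sq]
    linarith [coneWeight_mul (c := c₁) (t := t) hr]
  rw [le_inv_mul_iff₀ (by positivity), morawetzWeight, ← sq_abs (coneRatio c₂ t r),
    div_mul_eq_mul_div, mul_div_assoc', le_div_iff₀ hD]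
  calc δ ^ 4 * (1 + t ^ 2) * (jb t ^ 2 + (r - c₁ ^ 2 * t ^ 2) ^ 2)
      ≤ δ ^ 4 * (1 + t ^ 2 + r) * ((1 + t ^ 2 + r) * (1 + coneWeight c₁ t r)) := by
        gcongr
    _ = (1 + coneWeight c₁ t r) * (δ ^ 2 * (δ * (1 + t ^ 2 + r)) ^ 2) := by ring
    _ ≤ (1 + coneWeight c₁ t r) * (|coneRatio c₂ t r| ^ 2 * r ^ 2) := by gcongr
    _ ≤ (1 + coneWeight c₁ t r) * (|coneRatio c₂ t r| ^ 2 * r * (1 + r)) := by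
        rw [mul_assoc _ r, sq r]
        gcongr
        linarith

theorem exists_one_add_sq_le {c₁ c₂ : ℝ} (hc₁ : c₁ ≠ 0) (hne : c₁ ^ 2 ≠ c₂ ^ 2) :
    ∃ C > 0, ∀ t r : ℝ, 0 ≤ r → 1 + t ^ 2 ≤ C * ((1 + coneWeight c₁ t r) *
      (1 + morawetzWeight c₂ t (c₁ ^ 2 * t ^ 2) (jb t) r * (1 + r))) := by
  obtain ⟨δ, hδ, separated⟩ := exists_separated_of_near_cone (by positivity : 0 < c₁ ^ 2) hne
  refine ⟨2 + (δ ^ 2)⁻¹ + (δ ^ 4)⁻¹, by positivity, fun t r hr => ?_⟩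
  have hs := coneWeight_nonneg (c := c₁) (t := t) hr
  have hm := mul_nonneg (morawetzWeight_nonneg (c := c₂) (t := t) (a := c₁ ^ 2 * t ^ 2)
    (T := jb t) hr) (by positivity : 0 ≤ 1 + r)
  set s := coneWeight c₁ t r
  set m := morawetzWeight c₂ t (c₁ ^ 2 * t ^ 2) (jb t) r * (1 + r)
  have one_le : 1 ≤ (1 + s) * (1 + m) :=
    one_le_mul_of_one_le_of_one_le (by linarith) (by linarith)
  have s_le : s ≤ (1 + s) * (1 + m) := by nlinarith
  have mul_m_le : (1 + s) * m ≤ (1 + s) * (1 + m) := by gcongr; linarith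
  have hδ₂ : 0 ≤ (δ ^ 2)⁻¹ := by positivity
  have hδ₄ : 0 ≤ (δ ^ 4)⁻¹ := by positivity
  have one_le₂ := mul_le_mul_of_nonneg_left one_le hδ₂
  have one_le₄ := mul_le_mul_of_nonneg_left one_le hδ₄
  rcases le_total (t ^ 2) 1 with ht | ht
  · linarith
  rcases le_total (δ * (1 + t ^ 2 + r)) |c₁ ^ 2 * t ^ 2 - r| with hfar | hnear
  · linarith [one_add_sq_le_of_far_from_cone hδ hr hfar, mul_le_mul_of_nonneg_left s_le hδ₂]
  · obtain ⟨hδr, hfar⟩ := separated (t ^ 2) r ht hnear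
    linarith [one_add_sq_le_of_near_cone (c₁ := c₁) hδ hr hδr hfar,
      mul_le_mul_of_nonneg_left mul_m_le hδ₄]

end TwoCones


section KlainermanSideris

variable {n : ℕ}

/-- For `h = ∂g(X)`, the sum over `i < j` of the squares of the rotation derivatives `Ω_{ij}g`
at `X`; the first coordinate of `X` is time. -/
def angularSq (X h : Fin (n + 1) → ℝ) : ℝ :=
  (∑ i : Fin n, ∑ j : Fin n, (X i.succ * h j.succ - X j.succ * h i.succ) ^ 2) / 2

/-- For `h = ∂g(X)`, the sum of the squares at `X` of the derivatives `Γg` along all the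
translations, rotations and the scaling field. -/
def vectorFieldSq (X h : Fin (n + 1) → ℝ) : ℝ := rsq h + (X ⬝ᵥ h) ^ 2 + angularSq X h

/-- For `H = ∂²u(X)`, the spatial Laplacian of `u` at `X`. -/
def spaceTrace (H : Fin (n + 1) → Fin (n + 1) → ℝ) : ℝ := ∑ j : Fin n, H j.succ j.succ

/-- For `H = ∂²u(X)`, with rows `H b = ∂(∂_b u)(X)`, the sum of `|Γ∂_b u|²` over all `b` and all
`Γ`, plus the square of `(1 + t² + r²)^{1/2} (∂_t² - c²Δ)u`. -/
def hessEnergy (c : ℝ) (X : Fin (n + 1) → ℝ) (H : Fin (n + 1) → Fin (n + 1) → ℝ) : ℝ :=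
  ∑ b, vectorFieldSq X (H b) +
    (1 + rsq X) * (H 0 0 - c ^ 2 * spaceTrace H) ^ 2

/-- For `H = ∂²u(X)`, the sum over `i` of the rotation derivatives `Ω_{ji}∂_i u` at `X`. -/
def angularTrace (X : Fin (n + 1) → ℝ) (H : Fin (n + 1) → Fin (n + 1) → ℝ) (j : Fin n) : ℝ :=
  ∑ i : Fin n, (X j.succ * H i.succ i.succ - X i.succ * H i.succ j.succ)

variable {c : ℝ} {X h : Fin (n + 1) → ℝ} {H : Fin (n + 1) → Fin (n + 1) → ℝ}

theorem rsq_eq_add_rsq_tail : rsq X = X 0 ^ 2 + rsq (Fin.tail X) :=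
  Fin.sum_univ_succ _

theorem dotProduct_eq_add_dotProduct_tail :
    X ⬝ᵥ h = X 0 * h 0 + Fin.tail X ⬝ᵥ Fin.tail h :=
  Fin.sum_univ_succ _

theorem rsq_smul {a : ℝ} {x : Fin n → ℝ} : rsq (a • x) = a ^ 2 * rsq x := by
  simp only [rsq, Pi.smul_apply, smul_eq_mul, mul_pow, mul_sum]

theorem rsq_sub_add_le {x y z : Fin n → ℝ} : rsq (x - y + z) ≤ 3 * (rsq x + rsq y + rsq z) := by
  simp only [rsq, ← sum_add_distrib, mul_sum]
  refine sum_le_sum fun i _ => ?_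
  simp only [Pi.add_apply, Pi.sub_apply]
  linarith [sq_nonneg (x i + y i), sq_nonneg (x i - z i), sq_nonneg (y i + z i)]

theorem dotProduct_sq_le {x y : Fin n → ℝ} : (x ⬝ᵥ y) ^ 2 ≤ rsq x * rsq y :=
  sum_mul_sq_le_sq_mul_sq _ _ _

theorem sq_sub_sub_sub_le (a b c d : ℝ) :
    (a - b - c - d) ^ 2 ≤ 4 * (a ^ 2 + b ^ 2 + c ^ 2 + d ^ 2) := by
  linarith [sq_nonneg (a + b), sq_nonneg (a + c), sq_nonneg (a + d), sq_nonneg (b - c),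
    sq_nonneg (b - d), sq_nonneg (c - d)]

theorem angularSq_nonneg : 0 ≤ angularSq X h := by
  unfold angularSq
  positivity

theorem vectorFieldSq_nonneg : 0 ≤ vectorFieldSq X h :=
  add_nonneg (add_nonneg rsq_nonneg (sq_nonneg _)) angularSq_nonneg

theorem hessEnergy_nonneg : 0 ≤ hessEnergy c X H :=
  add_nonneg (sum_nonneg fun _ _ => vectorFieldSq_nonneg)
    (mul_nonneg (add_nonneg zero_le_one rsq_nonneg) (sq_nonneg _))

theorem angularSq_eq : angularSq X h =
    rsq (Fin.tail X) * rsq (Fin.tail h) - (Fin.tail X ⬝ᵥ Fin.tail h) ^ 2 := by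
  have expand (i j : Fin n) : (X i.succ * h j.succ - X j.succ * h i.succ) ^ 2 =
      X i.succ ^ 2 * h j.succ ^ 2 - 2 * ((X i.succ * h i.succ) * (X j.succ * h j.succ)) +
        h i.succ ^ 2 * X j.succ ^ 2 := by ring
  simp only [angularSq, expand, sum_add_distrib, sum_sub_distrib, ← mul_sum, ← sum_mul, rsq,
    dotProduct, Fin.tail]
  ring

theorem rsq_angularTrace_le :
    rsq (angularTrace X H) ≤ 2 * n * ∑ b : Fin n, angularSq X (H b.succ) :=
  calc rsq (angularTrace X H)
      ≤ ∑ j : Fin n, n * ∑ i : Fin n,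
          (X j.succ * H i.succ i.succ - X i.succ * H i.succ j.succ) ^ 2 := by
        refine sum_le_sum fun j _ => ?_
        simpa only [card_univ, Fintype.card_fin] using!
          sq_sum_le_card_mul_sum_sq (s := univ)
            (f := fun i : Fin n => X j.succ * H i.succ i.succ - X i.succ * H i.succ j.succ)
    _ = n * ∑ b : Fin n, ∑ j : Fin n,
          (X j.succ * H b.succ b.succ - X b.succ * H b.succ j.succ) ^ 2 := by
        rw [← mul_sum, sum_comm]
    _ ≤ n * ∑ b : Fin n, ∑ j : Fin n, ∑ i : Fin n,
          (X j.succ * H b.succ i.succ - X i.succ * H b.succ j.succ) ^ 2 := by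
        gcongr with b _ j
        exact single_le_sum (f := fun i : Fin n =>
          (X j.succ * H b.succ i.succ - X i.succ * H b.succ j.succ) ^ 2)
          (fun _ _ => sq_nonneg _) (mem_univ b)
    _ = _ := by
        simp only [angularSq, ← sum_div]
        ring

theorem sum_components_le_hessEnergy :
    rsq (Fin.tail (H 0)) + (X ⬝ᵥ H 0) ^ 2 + angularSq X (H 0) +
      rsq (fun j : Fin n => X ⬝ᵥ H j.succ) + rsq (angularTrace X H) +
      (1 + rsq X) * (H 0 0 - c ^ 2 * spaceTrace H) ^ 2 ≤
    (2 * n + 1) * hessEnergy c X H := by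
  have energy_eq : hessEnergy c X H = rsq (H 0) + (X ⬝ᵥ H 0) ^ 2 + angularSq X (H 0) +
      (∑ b : Fin n, rsq (H b.succ) + rsq (fun j : Fin n => X ⬝ᵥ H j.succ) +
        ∑ b : Fin n, angularSq X (H b.succ)) +
      (1 + rsq X) * (H 0 0 - c ^ 2 * spaceTrace H) ^ 2 := by
    rw [hessEnergy, Fin.sum_univ_succ]
    simp only [vectorFieldSq, sum_add_distrib, rsq]
  have hrow := rsq_eq_add_rsq_tail (X := H 0)
  have hrows : 0 ≤ ∑ b : Fin n, rsq (H b.succ) := sum_nonneg fun _ _ => rsq_nonneg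
  have hang₀ := angularSq_nonneg (X := X) (h := H 0)
  have htail := rsq_nonneg (x := Fin.tail (H 0))
  have hscal := rsq_nonneg (x := fun j : Fin n => X ⬝ᵥ H j.succ)
  have hwave : 0 ≤ (1 + rsq X) * (H 0 0 - c ^ 2 * spaceTrace H) ^ 2 :=
    mul_nonneg (add_nonneg zero_le_one rsq_nonneg) (sq_nonneg _)
  have angular_le : ∑ b : Fin n, angularSq X (H b.succ) ≤ hessEnergy c X H := by
    linarith [sq_nonneg (H 0 0), sq_nonneg (X ⬝ᵥ H 0)]
  have trace_le : rsq (angularTrace X H) ≤ 2 * n * hessEnergy c X H :=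
    rsq_angularTrace_le.trans (mul_le_mul_of_nonneg_left angular_le (by positivity))
  have hang : 0 ≤ ∑ b : Fin n, angularSq X (H b.succ) := sum_nonneg fun _ _ => angularSq_nonneg
  linarith [sq_nonneg (H 0 0)]

theorem scaling_rows_eq (H_symm : ∀ a b, H a b = H b a) :
    (fun j : Fin n => X ⬝ᵥ H j.succ) =
      X 0 • Fin.tail (H 0) + spaceTrace H • Fin.tail X - angularTrace X H := by
  funext j
  simp only [dotProduct, Fin.sum_univ_succ, angularTrace, sum_sub_distrib, ← mul_sum,
    H_symm j.succ, Fin.tail, spaceTrace, Pi.sub_apply, Pi.add_apply, Pi.smul_apply, smul_eq_mul]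
  ring

theorem cone_mul_spaceTrace (H_symm : ∀ a b, H a b = H b a) :
    (c ^ 2 * X 0 ^ 2 - rsq (Fin.tail X)) * spaceTrace H =
      X 0 * (X ⬝ᵥ H 0) - Fin.tail X ⬝ᵥ (fun j : Fin n => X ⬝ᵥ H j.succ) -
        Fin.tail X ⬝ᵥ angularTrace X H - X 0 * (X 0 * (H 0 0 - c ^ 2 * spaceTrace H)) := by
  have hself : Fin.tail X ⬝ᵥ Fin.tail X = rsq (Fin.tail X) := by simp only [dotProduct, rsq, sq]
  rw [scaling_rows_eq H_symm, dotProduct_eq_add_dotProduct_tail, dotProduct_sub, dotProduct_add,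
    dotProduct_smul, dotProduct_smul, hself]
  simp only [smul_eq_mul]
  ring

theorem coneWeight_mul_spaceTrace_sq_le (H_symm : ∀ a b, H a b = H b a) :
    coneWeight c (X 0) (rsq (Fin.tail X)) * spaceTrace H ^ 2 ≤
      4 * (2 * n + 1) * hessEnergy c X H := by
  have hr := rsq_nonneg (x := Fin.tail X)
  have hJ : 0 < 1 + X 0 ^ 2 + rsq (Fin.tail X) := by positivity
  have radial_scaling : (Fin.tail X ⬝ᵥ fun j : Fin n => X ⬝ᵥ H j.succ) ^ 2 ≤ _ := dotProduct_sq_le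
  have radial_trace : (Fin.tail X ⬝ᵥ angularTrace X H) ^ 2 ≤ _ := dotProduct_sq_le
  have components_le := sum_components_le_hessEnergy (c := c) (X := X) (H := H)
  rw [rsq_eq_add_rsq_tail, ← add_assoc] at components_le
  have hS := rsq_nonneg (x := fun j : Fin n => X ⬝ᵥ H j.succ)
  have hQ := rsq_nonneg (x := angularTrace X H)
  have hq := rsq_nonneg (x := Fin.tail (H 0))
  have hang := angularSq_nonneg (X := X) (h := H 0)
  have cone_eq := cone_mul_spaceTrace (c := c) (X := X) H_symm
  set S := fun j : Fin n => X ⬝ᵥ H j.succ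
  set f := H 0 0 - c ^ 2 * spaceTrace H
  refine le_of_mul_le_mul_right ?_ hJ
  set J := 1 + X 0 ^ 2 + rsq (Fin.tail X) with J_eq
  have ht_le : X 0 ^ 2 ≤ J := by linarith
  have hr_le : rsq (Fin.tail X) ≤ J := by linarith [sq_nonneg (X 0)]
  calc coneWeight c (X 0) (rsq (Fin.tail X)) * spaceTrace H ^ 2 * J
      = (X 0 * (X ⬝ᵥ H 0) - Fin.tail X ⬝ᵥ S - Fin.tail X ⬝ᵥ angularTrace X H -
          X 0 * (X 0 * f)) ^ 2 := by
        rw [mul_right_comm, J_eq, coneWeight_mul hr, ← cone_eq, mul_pow]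
    _ ≤ 4 * ((X 0 * (X ⬝ᵥ H 0)) ^ 2 + (Fin.tail X ⬝ᵥ S) ^ 2 +
          (Fin.tail X ⬝ᵥ angularTrace X H) ^ 2 + (X 0 * (X 0 * f)) ^ 2) :=
        sq_sub_sub_sub_le _ _ _ _
    _ ≤ 4 * (X 0 ^ 2 * (X ⬝ᵥ H 0) ^ 2 + rsq (Fin.tail X) * rsq S +
          rsq (Fin.tail X) * rsq (angularTrace X H) + X 0 ^ 2 * (X 0 ^ 2 * f ^ 2)) := by
        simp only [mul_pow]
        gcongr
    _ ≤ 4 * (J * (X ⬝ᵥ H 0) ^ 2 + J * rsq S + J * rsq (angularTrace X H) + J * (J * f ^ 2)) := by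
        gcongr
    _ ≤ 4 * (J * ((2 * n + 1) * hessEnergy c X H)) := by
        rw [← mul_add, ← mul_add, ← mul_add]
        gcongr
        linarith
    _ = 4 * (2 * n + 1) * hessEnergy c X H * J := by ring

theorem coneWeight_mul_sq_le (H_symm : ∀ a b, H a b = H b a) :
    coneWeight c (X 0) (rsq (Fin.tail X)) * H 0 0 ^ 2 ≤
      10 * (2 * n + 1) * (1 + c ^ 2) ^ 2 * hessEnergy c X H := by
  have hE := hessEnergy_nonneg (c := c) (X := X) (H := H)
  have hr := rsq_nonneg (x := Fin.tail X)
  have hW := coneWeight_nonneg (c := c) (t := X 0) hr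
  have wave_le : (1 + rsq X) * (H 0 0 - c ^ 2 * spaceTrace H) ^ 2 ≤ hessEnergy c X H :=
    le_add_of_nonneg_left (sum_nonneg fun _ _ => vectorFieldSq_nonneg)
  rw [rsq_eq_add_rsq_tail, ← add_assoc] at wave_le
  have trace_le := coneWeight_mul_spaceTrace_sq_le (c := c) (X := X) H_symm
  have hc : (c ^ 2) ^ 2 ≤ (1 + c ^ 2) ^ 2 := by gcongr; linarith
  set f := H 0 0 - c ^ 2 * spaceTrace H with f_eq
  have split : H 0 0 ^ 2 ≤ 2 * f ^ 2 + 2 * (c ^ 2) ^ 2 * spaceTrace H ^ 2 := by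
    rw [f_eq]
    nlinarith [sq_nonneg (H 0 0 - 2 * c ^ 2 * spaceTrace H)]
  calc coneWeight c (X 0) (rsq (Fin.tail X)) * H 0 0 ^ 2
      ≤ coneWeight c (X 0) (rsq (Fin.tail X)) *
          (2 * f ^ 2 + 2 * (c ^ 2) ^ 2 * spaceTrace H ^ 2) := by gcongr
    _ = 2 * (coneWeight c (X 0) (rsq (Fin.tail X)) * f ^ 2) +
          2 * (c ^ 2) ^ 2 * (coneWeight c (X 0) (rsq (Fin.tail X)) * spaceTrace H ^ 2) := by ring
    _ ≤ 2 * ((1 + c ^ 2) ^ 2 * (1 + X 0 ^ 2 + rsq (Fin.tail X)) * f ^ 2) +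
          2 * (1 + c ^ 2) ^ 2 * (4 * (2 * n + 1) * hessEnergy c X H) := by
        gcongr
        exact coneWeight_le hr
    _ ≤ 2 * ((1 + c ^ 2) ^ 2 * hessEnergy c X H) +
          2 * (1 + c ^ 2) ^ 2 * (4 * (2 * n + 1) * hessEnergy c X H) := by
        rw [mul_assoc ((1 + c ^ 2) ^ 2)]
        gcongr
    _ ≤ _ := by
        have : 0 ≤ 4 * n * (1 + c ^ 2) ^ 2 * hessEnergy c X H := by positivity
        linarith

theorem one_add_mul_rsq_tail_row_zero_le (H_symm : ∀ a b, H a b = H b a) :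
    (1 + X 0 ^ 2 + rsq (Fin.tail X)) * rsq (Fin.tail (H 0)) ≤
      3 * (2 * n + 1) * hessEnergy c X H +
        (1 + X 0 ^ 2 + rsq (Fin.tail X)) * (3 * spaceTrace H ^ 2 + 2 * H 0 0 ^ 2) := by
  have components_le := sum_components_le_hessEnergy (c := c) (X := X) (H := H)
  have hwave : 0 ≤ (1 + rsq X) * (H 0 0 - c ^ 2 * spaceTrace H) ^ 2 :=
    mul_nonneg (add_nonneg zero_le_one rsq_nonneg) (sq_nonneg _)
  have hr := rsq_nonneg (x := Fin.tail X)
  have hq := rsq_nonneg (x := Fin.tail (H 0))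
  have radial_row : (Fin.tail X ⬝ᵥ Fin.tail (H 0)) ^ 2 ≤
      2 * (X ⬝ᵥ H 0) ^ 2 + 2 * (X 0 ^ 2 * H 0 0 ^ 2) := by
    rw [dotProduct_eq_add_dotProduct_tail]
    nlinarith [sq_nonneg (2 * (X 0 * H 0 0) + Fin.tail X ⬝ᵥ Fin.tail (H 0))]
  have time_row : X 0 ^ 2 * rsq (Fin.tail (H 0)) ≤
      3 * (rsq (fun j : Fin n => X ⬝ᵥ H j.succ) + spaceTrace H ^ 2 * rsq (Fin.tail X) +
        rsq (angularTrace X H)) := by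
    have : X 0 • Fin.tail (H 0) = (fun j : Fin n => X ⬝ᵥ H j.succ) -
        spaceTrace H • Fin.tail X + angularTrace X H := by
      rw [scaling_rows_eq H_symm]
      abel
    rw [← rsq_smul, this, ← rsq_smul]
    exact rsq_sub_add_le
  have hang := angularSq_nonneg (X := X) (h := H 0)
  have angular_eq := angularSq_eq (X := X) (h := H 0)
  have : 0 ≤ (1 + X 0 ^ 2) * (3 * spaceTrace H ^ 2) := by positivity
  have : 0 ≤ (1 + rsq (Fin.tail X)) * (2 * H 0 0 ^ 2) := by positivity
  linarith [rsq_nonneg (x := angularTrace X H), sq_nonneg (X ⬝ᵥ H 0)]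

theorem coneWeight_mul_rsq_tail_row_zero_le (H_symm : ∀ a b, H a b = H b a) :
    coneWeight c (X 0) (rsq (Fin.tail X)) * rsq (Fin.tail (H 0)) ≤
      35 * (2 * n + 1) * (1 + c ^ 2) ^ 2 * hessEnergy c X H := by
  have hr := rsq_nonneg (x := Fin.tail X)
  have hE := hessEnergy_nonneg (c := c) (X := X) (H := H)
  have row_le := one_add_mul_rsq_tail_row_zero_le (c := c) (X := X) H_symm
  have trace_le := coneWeight_mul_spaceTrace_sq_le (c := c) (X := X) H_symm
  have time_le := coneWeight_mul_sq_le (c := c) (X := X) H_symm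
  have hk : 1 ≤ (1 + c ^ 2) ^ 2 := one_le_pow₀ (le_add_of_nonneg_right (sq_nonneg c))
  unfold coneWeight at *
  calc coneRatio c (X 0) (rsq (Fin.tail X)) ^ 2 * (1 + X 0 ^ 2 + rsq (Fin.tail X)) *
          rsq (Fin.tail (H 0))
      = coneRatio c (X 0) (rsq (Fin.tail X)) ^ 2 * ((1 + X 0 ^ 2 + rsq (Fin.tail X)) *
          rsq (Fin.tail (H 0))) := by ring
    _ ≤ coneRatio c (X 0) (rsq (Fin.tail X)) ^ 2 * (3 * (2 * n + 1) * hessEnergy c X H +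
        (1 + X 0 ^ 2 + rsq (Fin.tail X)) * (3 * spaceTrace H ^ 2 + 2 * H 0 0 ^ 2)) := by gcongr
    _ ≤ _ := by
        have := mul_le_mul_of_nonneg_right (coneRatio_sq_le (c := c) (t := X 0) hr)
          (by positivity : 0 ≤ 3 * (2 * n + 1) * hessEnergy c X H)
        have := mul_le_mul_of_nonneg_right hk
          (by positivity : 0 ≤ 12 * (2 * n + 1) * hessEnergy c X H)
        linarith

end KlainermanSideris

section SpaceTime

variable {n : ℕ} {g u : (Fin (n + 1) → ℝ) → ℝ} {c t : ℝ} {x : Fin n → ℝ}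

/-- The restriction `g(t,·)` of a function on space-time to a time slice. -/
def timeSlice (t : ℝ) (g : (Fin (n + 1) → ℝ) → ℝ) (x : Fin n → ℝ) : ℝ := g (Fin.cons t x)

/-- The Hessian matrix at `X`, with rows `hessian u X b = ∂(∂_b u)(X)`. -/
def hessian (u : (Fin n → ℝ) → ℝ) (X : Fin n → ℝ) (b a : Fin n) : ℝ :=
  partialDeriv a (partialDeriv b u) X

/-- The sum of the squares of the quantities on the right-hand side of the Klainerman–Sideris
estimate: `u'`, `Γu'` and `(1 + t² + r²)^{1/2} (∂_t² - c²Δ)u`. -/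
def energyDensity (c : ℝ) (u : (Fin (n + 1) → ℝ) → ℝ) (X : Fin (n + 1) → ℝ) : ℝ :=
  gradSq u X + hessEnergy c X (hessian u X)

theorem hasFDerivAt_cons_const : HasFDerivAt (fun y : Fin n → ℝ => (Fin.cons t y : Fin (n + 1) → ℝ))
    ((0 : (Fin n → ℝ) →L[ℝ] ℝ).finCons (.id ℝ (Fin n → ℝ))) x :=
  (hasFDerivAt_const t x).finCons (hasFDerivAt_id x)

theorem contDiff_timeSlice {m : WithTop ℕ∞} (hg : ContDiff ℝ m g) :
    ContDiff ℝ m (timeSlice t g) :=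
  hg.comp (contDiff_pi.2 (Fin.cases contDiff_const fun i => contDiff_apply ℝ ℝ i))

theorem isClosedEmbedding_cons_const :
    Topology.IsClosedEmbedding fun y : Fin n → ℝ => (Fin.cons t y : Fin (n + 1) → ℝ) :=
  Function.LeftInverse.isClosedEmbedding (f := fun Y : Fin (n + 1) → ℝ => Fin.tail Y)
    (fun y => Fin.tail_cons (α := fun _ => ℝ) t y)
    (continuous_pi fun i => continuous_apply i.succ) (continuous_const.finCons continuous_id)

theorem isCc_timeSlice (hg : IsCc g) : IsCc (timeSlice t g) :=
  hg.comp_isClosedEmbedding isClosedEmbedding_cons_const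

theorem partialDeriv_timeSlice (hg : Differentiable ℝ g) (i : Fin n) :
    partialDeriv i (timeSlice t g) = timeSlice t (partialDeriv i.succ g) := by
  have cons_single : (Fin.cons 0 (Pi.single i 1) : Fin (n + 1) → ℝ) = Pi.single i.succ 1 := by
    ext j
    refine Fin.cases ?_ (fun k => ?_) j <;> simp [Pi.single_apply]
  funext x
  have := ((hg (Fin.cons t x)).hasFDerivAt.comp x hasFDerivAt_cons_const).fderiv
  simp only [partialDeriv, timeSlice, ← cons_single]
  exact congrArg (· (Pi.single i 1)) this

theorem isCc_energyDensity (hu : ContDiff ℝ 2 u) (huc : HasCompactSupport u) :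
    IsCc (energyDensity c u) := by
  have hH (b a : Fin (n + 1)) : IsCc fun X => hessian u X b a := isCc_partialDeriv₂ hu huc a b
  have hrot (b : Fin (n + 1)) (i j : Fin n) : IsCc fun X : Fin (n + 1) → ℝ =>
      X i.succ * hessian u X b j.succ - X j.succ * hessian u X b i.succ :=
    ((hH b _).mul_left (continuous_apply _)).sub ((hH b _).mul_left (continuous_apply _))
  have hangular (b : Fin (n + 1)) : IsCc fun X => angularSq X (hessian u X b) :=
    (IsCc.sum fun i => IsCc.sum fun j => (hrot b i j).sq).comp_left
      (φ := fun y => y / 2) (continuous_id.div_const 2) (zero_div 2)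
  have hrow (b : Fin (n + 1)) : IsCc fun X => rsq (hessian u X b) :=
    IsCc.sum fun a => (hH b a).sq
  have hscaling (b : Fin (n + 1)) : IsCc fun X => X ⬝ᵥ hessian u X b :=
    IsCc.sum fun a => (hH b a).mul_left (continuous_apply a)
  have hfields (b : Fin (n + 1)) : IsCc fun X => vectorFieldSq X (hessian u X b) :=
    ((hrow b).add (hscaling b).sq).add (hangular b)
  have hwave : IsCc fun X => hessian u X 0 0 - c ^ 2 * spaceTrace (hessian u X) :=
    (hH 0 0).sub ((IsCc.sum fun j : Fin n => hH j.succ j.succ).mul_left continuous_const)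
  exact (isCc_gradSq (hu.of_le one_le_two) huc).add ((IsCc.sum hfields).add
    (hwave.sq.mul_left (continuous_const.add (contDiff_rsq (m := 0)).continuous)))

theorem hessian_comm (hu : ContDiff ℝ 2 u) (X : Fin (n + 1) → ℝ) (a b : Fin (n + 1)) :
    hessian u X a b = hessian u X b a :=
  congrFun (partialDeriv_comm hu b a) X

theorem partialDeriv₂_timeSlice (hu : ContDiff ℝ 2 u) (i j : Fin n) :
    partialDeriv i (partialDeriv j (timeSlice t u)) x =
      hessian u (Fin.cons t x) j.succ i.succ := by
  rw [partialDeriv_timeSlice (hu.differentiable two_ne_zero), partialDeriv_timeSlice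
    ((contDiff_partialDeriv (k := 1) hu (by norm_num) j.succ).differentiable one_ne_zero)]
  rfl

theorem timeSlice_hessSq_eq (hu : ContDiff ℝ 2 u) : timeSlice t (hessSq u) x =
    hessian u (Fin.cons t x) 0 0 ^ 2 + 2 * rsq (Fin.tail (hessian u (Fin.cons t x) 0)) +
      hessSq (timeSlice t u) x := by
  have hess_eq : hessSq (timeSlice t u) x =
      ∑ i : Fin n, ∑ j : Fin n, hessian u (Fin.cons t x) j.succ i.succ ^ 2 := by
    simp only [hessSq, partialDeriv₂_timeSlice hu]
  have hess₄_eq : timeSlice t (hessSq u) x =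
    ∑ a, ∑ b, hessian u (Fin.cons t x) b a ^ 2 := rfl
  rw [hess_eq, hess₄_eq]
  simp only [Fin.sum_univ_succ, sum_add_distrib, rsq, Fin.tail, hessian_comm hu _ (Fin.succ _) 0]
  ring

theorem lap_timeSlice (hu : ContDiff ℝ 2 u) :
    lap (timeSlice t u) x = spaceTrace (hessian u (Fin.cons t x)) := by
  simp only [lap, partialDeriv₂_timeSlice hu, spaceTrace]

theorem gradSq_timeSlice_le (hu : Differentiable ℝ u) :
    gradSq (timeSlice t u) x ≤ timeSlice t (gradSq u) x := by
  simp only [gradSq, timeSlice, partialDeriv_timeSlice hu, Fin.sum_univ_succ]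
  exact le_add_of_nonneg_left (sq_nonneg _)

theorem gradSq_le_energyDensity {X : Fin (n + 1) → ℝ} : gradSq u X ≤ energyDensity c u X :=
  le_add_of_nonneg_right hessEnergy_nonneg

theorem energyDensity_nonneg {X : Fin (n + 1) → ℝ} : 0 ≤ energyDensity c u X :=
  gradSq_nonneg.trans gradSq_le_energyDensity

theorem hessSq_add_gradSq_le_energyDensity {X : Fin (n + 1) → ℝ} :
    hessSq u X + gradSq u X ≤ energyDensity c u X := by
  have hrow (b : Fin (n + 1)) : rsq (hessian u X b) ≤ vectorFieldSq X (hessian u X b) := by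
    rw [vectorFieldSq, add_assoc]
    exact le_add_of_nonneg_right (add_nonneg (sq_nonneg _) angularSq_nonneg)
  have hwave := mul_nonneg (add_nonneg zero_le_one (rsq_nonneg (x := X)))
    (sq_nonneg (hessian u X 0 0 - c ^ 2 * spaceTrace (hessian u X)))
  have hess_eq : hessSq u X = ∑ b, rsq (hessian u X b) := sum_comm
  rw [energyDensity, hessEnergy]
  linarith [sum_le_sum fun b (_ : b ∈ univ) => hrow b]

theorem integral_coneWeight_mul_hessSq_timeSlice_le (c t : ℝ) (hu : ContDiff ℝ 3 u)
    (huc : HasCompactSupport u) :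
    ∫ x, coneWeight c t (rsq x) * hessSq (timeSlice t u) x ≤
      ∫ x, (3 * (coneWeight c t (rsq x) * lap (timeSlice t u) x ^ 2) +
        8 * (3 + c ^ 2) ^ 2 * gradSq (timeSlice t u) x) := by
  have := integral_mul_hessSq_le (contDiff_coneWeight_rsq c t)
    (fun _ => coneWeight_nonneg rsq_nonneg) (by positivity : 0 ≤ 4 * (3 + c ^ 2) ^ 2)
    gradSq_coneWeight_le (contDiff_timeSlice (t := t) hu)
    (isCc_timeSlice ⟨hu.continuous, huc⟩).hasCompactSupport
  convert! this using 4
  ring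

theorem weighted_energy_le (hu : ContDiff ℝ 2 u) :
    timeSlice t (hessSq u) x + coneWeight c t (rsq x) *
        (timeSlice t (hessSq u) x - hessSq (timeSlice t u) x) +
      (3 * (coneWeight c t (rsq x) * lap (timeSlice t u) x ^ 2) +
        8 * (3 + c ^ 2) ^ 2 * gradSq (timeSlice t u) x) ≤
      93 * (2 * n + 1) * (1 + c ^ 2) ^ 2 * timeSlice t (energyDensity c u) x := by
  have H_symm := hessian_comm hu (Fin.cons t x)
  have trace_le := coneWeight_mul_spaceTrace_sq_le (c := c) (X := Fin.cons t x) H_symm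
  have time_le := coneWeight_mul_sq_le (c := c) (X := Fin.cons t x) H_symm
  have row_le := coneWeight_mul_rsq_tail_row_zero_le (c := c) (X := Fin.cons t x) H_symm
  simp only [Fin.cons_zero, Fin.tail_cons] at trace_le time_le row_le
  have grad_le := gradSq_timeSlice_le (t := t) (x := x) (hu.differentiable two_ne_zero)
  have hess_le := hessSq_add_gradSq_le_energyDensity (c := c) (u := u) (X := Fin.cons t x)
  have hE := hessEnergy_nonneg (c := c) (X := Fin.cons t x) (H := hessian u (Fin.cons t x))
  have hG := gradSq_nonneg (f := u) (x := Fin.cons t x)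
  have hk : 1 ≤ (1 + c ^ 2) ^ 2 := one_le_pow₀ (le_add_of_nonneg_right (sq_nonneg c))
  have hn : (1 : ℝ) ≤ 2 * n + 1 := le_add_of_nonneg_left (by positivity)
  rw [lap_timeSlice hu, timeSlice_hessSq_eq hu, add_sub_cancel_right, ← timeSlice_hessSq_eq hu]
  simp only [timeSlice, energyDensity] at grad_le hess_le ⊢
  generalize hessEnergy c (Fin.cons t x) (hessian u (Fin.cons t x)) = E at *
  generalize gradSq u (Fin.cons t x) = G at *
  have hspeed : (3 + c ^ 2) ^ 2 ≤ 9 * (1 + c ^ 2) ^ 2 := by nlinarith [sq_nonneg c]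
  have grad_term := mul_le_mul hspeed grad_le (gradSq_nonneg ..) (by positivity)
  have hEn : E ≤ (2 * n + 1) * E := le_mul_of_one_le_left hE hn
  have hEk : (2 * n + 1) * E ≤ (2 * n + 1) * (1 + c ^ 2) ^ 2 * E := by gcongr; nlinarith
  have hGn : (1 + c ^ 2) ^ 2 * G ≤ (2 * n + 1) * (1 + c ^ 2) ^ 2 * G := by gcongr; nlinarith
  have hkG : 0 ≤ (1 + c ^ 2) ^ 2 * G := by positivity
  linarith

theorem integral_one_add_coneWeight_mul_hessSq_le (c t : ℝ) (hu : ContDiff ℝ 3 u)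
    (huc : HasCompactSupport u) :
    ∫ x, (1 + coneWeight c t (rsq x)) * timeSlice t (hessSq u) x ≤
      93 * (2 * n + 1) * (1 + c ^ 2) ^ 2 * ∫ x, timeSlice t (energyDensity c u) x := by
  have hu₂ : ContDiff ℝ 2 u := hu.of_le (by norm_num)
  have hslice := contDiff_timeSlice (t := t) hu₂
  have hslicec := (isCc_timeSlice (t := t) ⟨hu.continuous, huc⟩).hasCompactSupport
  have hW := (contDiff_coneWeight_rsq (n := n) (m := 0) c t).continuous
  have hhess := isCc_timeSlice (t := t) (isCc_hessSq hu₂ huc)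
  have hhess₃ := (isCc_hessSq hslice hslicec).mul_left hW
  have hlap := (((isCc_lap hslice hslicec).sq.mul_left hW).mul_left
    (continuous_const (y := (3 : ℝ)))).add ((isCc_gradSq (hslice.of_le one_le_two) hslicec).mul_left
      (continuous_const (y := 8 * (3 + c ^ 2) ^ 2)))
  have hmixed := hhess.add ((hhess.sub (isCc_hessSq hslice hslicec)).mul_left hW)
  calc ∫ x, (1 + coneWeight c t (rsq x)) * timeSlice t (hessSq u) x
      = (∫ x, (timeSlice t (hessSq u) x + coneWeight c t (rsq x) *
          (timeSlice t (hessSq u) x - hessSq (timeSlice t u) x))) +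
        ∫ x, coneWeight c t (rsq x) * hessSq (timeSlice t u) x := by
        rw [← integral_add hmixed.integrable hhess₃.integrable]
        refine integral_congr_ae (ae_of_all _ fun x => ?_)
        ring
    _ ≤ (∫ x, (timeSlice t (hessSq u) x + coneWeight c t (rsq x) *
          (timeSlice t (hessSq u) x - hessSq (timeSlice t u) x))) +
        ∫ x, (3 * (coneWeight c t (rsq x) * lap (timeSlice t u) x ^ 2) +
          8 * (3 + c ^ 2) ^ 2 * gradSq (timeSlice t u) x) :=
        add_le_add_right (integral_coneWeight_mul_hessSq_timeSlice_le c t hu huc) _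
    _ ≤ 93 * (2 * n + 1) * (1 + c ^ 2) ^ 2 * ∫ x, timeSlice t (energyDensity c u) x := by
        rw [← integral_add hmixed.integrable hlap.integrable, ← integral_const_mul]
        exact integral_mono (hmixed.add hlap).integrable
          ((isCc_timeSlice (isCc_energyDensity hu₂ huc)).integrable.const_mul _)
          fun x => weighted_energy_le hu₂

theorem sum_gradSq_timeSlice_le (hu : ContDiff ℝ 2 u) :
    ∑ b, gradSq (timeSlice t (partialDeriv b u)) x ≤ timeSlice t (hessSq u) x := by
  have hrow (b : Fin (n + 1)) : gradSq (timeSlice t (partialDeriv b u)) x ≤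
      timeSlice t (gradSq (partialDeriv b u)) x :=
    gradSq_timeSlice_le ((contDiff_partialDeriv (k := 1) hu (by norm_num) b).differentiable
      one_ne_zero)
  have hess_eq : hessSq u (Fin.cons t x) = ∑ b, gradSq (partialDeriv b u) (Fin.cons t x) :=
    sum_comm
  exact (sum_le_sum fun b _ => hrow b).trans_eq hess_eq.symm

theorem integral_morawetzWeight_mul_gradSq_le_integral_hessSq (c t a : ℝ) {T : ℝ} (hT : 0 < T)
    (hu : ContDiff ℝ 2 u) (huc : HasCompactSupport u) :
    ∫ x, 2 * morawetzWeight c t a T (rsq x) * timeSlice t (gradSq u) x ≤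
      ∫ x, (10 + 2 * n) * (1 + c ^ 2) ^ 2 / T *
        (timeSlice t (gradSq u) x + coneWeight c t (rsq x) * timeSlice t (hessSq u) x) := by
  have hslice (b : Fin (n + 1)) : ContDiff ℝ 1 (timeSlice t (partialDeriv b u)) :=
    contDiff_timeSlice (contDiff_partialDeriv hu (by norm_num) b)
  have hcc (b : Fin (n + 1)) : IsCc (timeSlice t (partialDeriv b u)) :=
    isCc_timeSlice (isCc_partialDeriv (hu.of_le one_le_two) huc b)
  have hW := (contDiff_coneWeight_rsq (n := n) (m := 0) c t).continuous
  have hm : Continuous fun x : Fin n → ℝ => 2 * morawetzWeight c t a T (rsq x) :=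
    continuous_const.mul (continuous_morawetzWeight_rsq c t a hT)
  have hgrad (b : Fin (n + 1)) := isCc_gradSq (hslice b) (hcc b).hasCompactSupport
  have hright (b : Fin (n + 1)) := (((hcc b).sq.add ((hgrad b).mul_left hW)).mul_left
    (continuous_const (y := (10 + 2 * (n : ℝ)) * (1 + c ^ 2) ^ 2 / T)))
  have hgradSq := isCc_timeSlice (t := t) (isCc_gradSq (hu.of_le one_le_two) huc)
  have hhess := isCc_timeSlice (t := t) (isCc_hessSq hu huc)
  calc ∫ x, 2 * morawetzWeight c t a T (rsq x) * timeSlice t (gradSq u) x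
      = ∑ b, ∫ x, 2 * morawetzWeight c t a T (rsq x) * timeSlice t (partialDeriv b u) x ^ 2 := by
        rw [← integral_finsetSum _ fun b _ => ((hcc b).sq.mul_left hm).integrable]
        simp only [← mul_sum]
        rfl
    _ ≤ ∑ b, ∫ x, (10 + 2 * n) * (1 + c ^ 2) ^ 2 / T * (timeSlice t (partialDeriv b u) x ^ 2 +
          coneWeight c t (rsq x) * gradSq (timeSlice t (partialDeriv b u)) x) :=
        sum_le_sum fun b _ =>
          integral_two_mul_morawetzWeight_mul_sq_le c t a hT (hslice b) (hcc b).hasCompactSupport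
    _ ≤ _ := by
        rw [← integral_finsetSum _ fun b _ => (hright b).integrable]
        refine integral_mono (IsCc.sum hright).integrable
          ((hgradSq.add (hhess.mul_left hW)).integrable.const_mul _) fun x => ?_
        simp only [← mul_sum, sum_add_distrib]
        exact mul_le_mul_of_nonneg_left (add_le_add_right (mul_le_mul_of_nonneg_left
          (sum_gradSq_timeSlice_le hu) (coneWeight_nonneg rsq_nonneg)) _) (by positivity)

theorem integral_morawetzWeight_mul_gradSq_le (c t a : ℝ) {T : ℝ} (hT : 0 < T)
    (hu : ContDiff ℝ 3 u) (huc : HasCompactSupport u) :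
    ∫ x, morawetzWeight c t a T (rsq x) * timeSlice t (gradSq u) x ≤
      94 * (2 * n + 1) * (5 + n) * (1 + c ^ 2) ^ 4 / T *
        ∫ x, timeSlice t (energyDensity c u) x := by
  have hu₂ : ContDiff ℝ 2 u := hu.of_le (by norm_num)
  have hW := (contDiff_coneWeight_rsq (n := n) (m := 0) c t).continuous
  have hgradSq := isCc_timeSlice (t := t) (isCc_gradSq (hu.of_le (by norm_num)) huc)
  have hhess := isCc_timeSlice (t := t) (isCc_hessSq hu₂ huc)
  have hhess₁ : IsCc fun x => (1 + coneWeight c t (rsq x)) * timeSlice t (hessSq u) x :=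
    hhess.mul_left (continuous_const.add hW)
  have hE := isCc_timeSlice (t := t) (isCc_energyDensity (c := c) hu₂ huc)
  have morawetz := integral_morawetzWeight_mul_gradSq_le_integral_hessSq c t a hT hu₂ huc
  simp only [mul_assoc (2 : ℝ), integral_const_mul] at morawetz
  have integrand_le : ∫ x, (timeSlice t (gradSq u) x + coneWeight c t (rsq x) *
        timeSlice t (hessSq u) x) ≤
      ∫ x, (timeSlice t (energyDensity c u) x +
        (1 + coneWeight c t (rsq x)) * timeSlice t (hessSq u) x) := by
    refine integral_mono (hgradSq.add (hhess.mul_left hW)).integrable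
      (hE.add hhess₁).integrable fun x => ?_
    have hess_nonneg : 0 ≤ timeSlice t (hessSq u) x := hessSq_nonneg
    have grad_le : timeSlice t (gradSq u) x ≤ timeSlice t (energyDensity c u) x :=
      gradSq_le_energyDensity
    linarith
  rw [integral_add hE.integrable hhess₁.integrable] at integrand_le
  have second_order := integral_one_add_coneWeight_mul_hessSq_le c t hu huc
  have hk : 1 ≤ (2 * n + 1) * (1 + c ^ 2) ^ 2 := one_le_mul_of_one_le_of_one_le
    (le_add_of_nonneg_left (by positivity)) (one_le_pow₀ (le_add_of_nonneg_right (sq_nonneg c)))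
  have total := integrand_le.trans (add_le_add (le_mul_of_one_le_left
    (integral_nonneg fun x => energyDensity_nonneg) hk) second_order)
  have := morawetz.trans (mul_le_mul_of_nonneg_left total (by positivity))
  linear_combination this / 2

end SpaceTime

section QuantityQ

variable {u g : Pt → ℝ} {c t : ℝ}

theorem rad_sq (x : Sp) : rad x ^ 2 = rsq x := sq_sqrt rsq_nonneg

theorem rad_nonneg (x : Sp) : 0 ≤ rad x := sqrt_nonneg _

theorem continuous_rad : Continuous rad := (contDiff_rsq (m := 0)).continuous.sqrt

theorem continuous_jb : Continuous jb := (continuous_const.add (continuous_pow 2)).sqrt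

theorem jb_rad_sq (x : Sp) : jb (rad x) ^ 2 = 1 + rsq x := by rw [jb_sq, rad_sq]

theorem sum_Gam_sq_eq (X : Pt) : ∑ k, Gam k g X ^ 2 = vectorFieldSq X fun a => pd a g X := by
  simp [Fin.sum_univ_succ, Gam, rot, scal, vectorFieldSq, angularSq, rsq, dotProduct]
  ring

theorem one_add_rsq_cons_le (ht : 0 ≤ t) (x : Sp) :
    1 + rsq (Fin.cons t x : Pt) ≤ jb (t + rad x) ^ 2 := by
  rw [rsq_eq_add_rsq_tail, Fin.cons_zero, Fin.tail_cons, jb_sq, ← rad_sq]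
  linear_combination 2 * mul_nonneg ht (rad_nonneg x)

theorem energyDensity_le (ht : 0 ≤ t) (x : Sp) : energyDensity c u (Fin.cons t x) ≤
    ∑ a, pd a u (Fin.cons t x) ^ 2 + ∑ k, ∑ a, Gam k (pd a u) (Fin.cons t x) ^ 2 +
      jb (t + rad x) ^ 2 * boxc c u (Fin.cons t x) ^ 2 := by
  rw [sum_comm, add_assoc]
  simp only [sum_Gam_sq_eq]
  exact add_le_add_right (add_le_add_right
    (mul_le_mul_of_nonneg_right (one_add_rsq_cons_le ht x) (sq_nonneg _)) _) _

theorem isCc_Gam (hg : ContDiff ℝ 1 g) (hgc : HasCompactSupport g) (k : Fin 8) :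
    IsCc (Gam k g) := by
  have hpd (a : Fin 4) : IsCc (pd a g) := isCc_partialDeriv hg hgc a
  have hcoord (i j : Fin 4) : IsCc fun X : Pt => X i * pd j g X :=
    (hpd j).mul_left (continuous_apply i)
  have hrot (i j : Fin 4) : IsCc (rot i j g) := (hcoord i j).sub (hcoord j i)
  have hscal : IsCc (scal g) := IsCc.sum fun a => hcoord a a
  fin_cases k
  exacts [hpd 0, hpd 1, hpd 2, hpd 3, hrot 1 2, hrot 1 3, hrot 2 3, hscal]

theorem isCc_boxc (hu : ContDiff ℝ 2 u) (huc : HasCompactSupport u) : IsCc (boxc c u) :=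
  (isCc_partialDeriv₂ hu huc 0 0).sub
    ((IsCc.sum fun j : Fin 3 => isCc_partialDeriv₂ hu huc j.succ j.succ).mul_left
      continuous_const)

theorem add_sum_add_le_sq {κ : Type*} [Fintype κ] {a d : ℝ} {b : κ → ℝ} (ha : 0 ≤ a)
    (hb : ∀ k, 0 ≤ b k) (hd : 0 ≤ d) : a + ∑ k, b k + d ≤ (√a + ∑ k, √(b k) + √d) ^ 2 := by
  have sum_le := sum_sq_le_sq_sum_of_nonneg (s := univ) fun k _ => sqrt_nonneg (b k)
  have hsum : 0 ≤ ∑ k, √(b k) := sum_nonneg fun k _ => sqrt_nonneg _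
  simp only [sq_sqrt (hb _)] at sum_le
  nlinarith [sq_sqrt ha, sq_sqrt hd, mul_nonneg (sqrt_nonneg a) hsum,
    mul_nonneg (sqrt_nonneg a) (sqrt_nonneg d), mul_nonneg hsum (sqrt_nonneg d)]

theorem Qfac_eq : Qfac c u t =
    √(∫ x : Sp, ∑ a, pd a u (Fin.cons t x) ^ 2) +
      ∑ k, √(∫ x : Sp, ∑ a, Gam k (pd a u) (Fin.cons t x) ^ 2) +
      √(∫ x : Sp, jb (t + rad x) ^ 2 * boxc c u (Fin.cons t x) ^ 2) := by
  rw [Qfac, sum_range_succ, sum_range_one, Fintype.sum_unique]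
  simp only [sqrt_eq_rpow]
  congr 2

theorem Qfac_nonneg : 0 ≤ Qfac c u t := by
  rw [Qfac_eq]
  positivity

theorem integral_energyDensity_le (hu : ContDiff ℝ 2 u) (huc : HasCompactSupport u) (ht : 0 ≤ t) :
    ∫ x, timeSlice t (energyDensity c u) x ≤ Qfac c u t ^ 2 := by
  have hpd (a : Fin 4) : ContDiff ℝ 1 (pd a u) := contDiff_partialDeriv hu (by norm_num) a
  have hgrad : IsCc fun x : Sp => ∑ a, pd a u (Fin.cons t x) ^ 2 :=
    isCc_timeSlice (isCc_gradSq (hu.of_le one_le_two) huc)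
  have hfield (k : Fin 8) : IsCc fun x : Sp => ∑ a, Gam k (pd a u) (Fin.cons t x) ^ 2 :=
    isCc_timeSlice (IsCc.sum fun a =>
      (isCc_Gam (hpd a) (hasCompactSupport_partialDeriv huc a) k).sq)
  have hbox : IsCc fun x : Sp => jb (t + rad x) ^ 2 * boxc c u (Fin.cons t x) ^ 2 :=
    (isCc_timeSlice (isCc_boxc hu huc).sq).mul_left
      ((continuous_jb.comp (continuous_const.add continuous_rad)).pow 2)
  have integral_le := integral_mono (μ := volume)
    (isCc_timeSlice (isCc_energyDensity hu huc)).integrable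
    ((hgrad.add (IsCc.sum hfield)).add hbox).integrable (energyDensity_le (c := c) (u := u) ht)
  rw [integral_add (hgrad.add (IsCc.sum hfield)).integrable hbox.integrable,
    integral_add hgrad.integrable (IsCc.sum hfield).integrable,
    integral_finsetSum _ fun k _ => (hfield k).integrable] at integral_le
  rw [Qfac_eq]
  exact integral_le.trans (add_sum_add_le_sq (integral_nonneg fun x => gradSq_nonneg)
    (fun k => integral_nonneg fun x => sum_nonneg fun a _ => sq_nonneg _)
    (integral_nonneg fun x => by positivity))

end QuantityQ

section DifferentSpeeds

variable {u v : Pt → ℝ} {c t : ℝ}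

theorem d2abs_le (X : Pt) : d2abs u X ≤ 4 * √(hessSq u X) := by
  have sq_le : d2abs u X ^ 2 ≤ 4 ^ 2 * hessSq u X :=
    calc d2abs u X ^ 2 ≤ 4 * ∑ a, (∑ b, |pd a (pd b u) X|) ^ 2 := by
          simpa using! sq_sum_le_card_mul_sum_sq (s := univ) (f := fun a => ∑ b, |pd a (pd b u) X|)
      _ ≤ 4 * ∑ a, 4 * ∑ b, |pd a (pd b u) X| ^ 2 := by
          gcongr with a
          simpa using! sq_sum_le_card_mul_sum_sq (s := univ) (f := fun b => |pd a (pd b u) X|)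
      _ = 4 ^ 2 * hessSq u X := by
          simp only [sq_abs, ← mul_sum, ← mul_assoc, ← sq]
          rfl
  rw [← sqrt_sq (by norm_num : (0 : ℝ) ≤ 4), ← sqrt_mul (sq_nonneg _)]
  exact le_sqrt_of_sq_le sq_le

theorem jb_le_of_one_add_sq_le {C s m R : ℝ} (hC : 0 ≤ C) (hs : 0 ≤ s) (hR : 0 < R)
    (h : 1 + t ^ 2 ≤ C * ((1 + s) * (1 + m * R ^ 2))) :
    jb t ≤ √C * (√(1 + s) * (R * √((R ^ 2)⁻¹ + m))) := by
  have hfactor : 1 + m * R ^ 2 = R ^ 2 * ((R ^ 2)⁻¹ + m) := by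
    field_simp
  rw [hfactor] at h
  rw [jb, ← sqrt_sq hR.le, ← sqrt_mul (sq_nonneg R), ← sqrt_mul (by positivity), ← sqrt_mul hC,
    sqrt_sq hR.le]
  exact sqrt_le_sqrt h

theorem d2abs_mul_gradNorm_mul_inv_jb_le {C s m : ℝ} {x : Sp} (hC : 0 ≤ C) (hs : 0 ≤ s)
    (hm : 0 ≤ m) (h : 1 + t ^ 2 ≤ C * ((1 + s) * (1 + m * (1 + rsq x)))) (X : Pt) :
    d2abs u X * gradNorm v X * (jb (rad x))⁻¹ ≤ 4 * √C * (jb t)⁻¹ *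
      (√((1 + s) * hessSq u X) * √(((jb (rad x) ^ 2)⁻¹ + m) * gradSq v X)) := by
  have hR := jb_pos (rad x)
  have hT := jb_pos t
  rw [← jb_rad_sq] at h
  have jb_le := jb_le_of_one_add_sq_le hC hs hR h
  calc d2abs u X * gradNorm v X * (jb (rad x))⁻¹
      ≤ 4 * √(hessSq u X) * √(gradSq v X) * (jb (rad x))⁻¹ := by
        have hess_le := d2abs_le (u := u) X
        have hgrad : gradNorm v X = √(gradSq v X) := rfl
        rw [hgrad]
        gcongr
    _ = 4 * √(hessSq u X) * √(gradSq v X) * (jb (rad x))⁻¹ * (jb t)⁻¹ * jb t := by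
        rw [inv_mul_cancel_right₀ hT.ne']
    _ ≤ 4 * √(hessSq u X) * √(gradSq v X) * (jb (rad x))⁻¹ * (jb t)⁻¹ *
          (√C * (√(1 + s) * (jb (rad x) * √((jb (rad x) ^ 2)⁻¹ + m)))) := by
        gcongr
    _ = _ := by
        rw [sqrt_mul (by positivity), sqrt_mul (by positivity)]
        field_simp

theorem integral_d2abs_mul_gradNorm_mul_inv_jb_le {C : ℝ} {s m : ℝ → ℝ} (hC : 0 ≤ C)
    (hs : ∀ r, 0 ≤ r → 0 ≤ s r) (hm : ∀ r, 0 ≤ r → 0 ≤ m r)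
    (hs_cont : Continuous fun x : Sp => s (rsq x)) (hm_cont : Continuous fun x : Sp => m (rsq x))
    (h : ∀ r, 0 ≤ r → 1 + t ^ 2 ≤ C * ((1 + s r) * (1 + m r * (1 + r))))
    (hu : ContDiff ℝ 2 u) (huc : HasCompactSupport u)
    (hv : ContDiff ℝ 1 v) (hvc : HasCompactSupport v) :
    ∫ x : Sp, d2abs u (Fin.cons t x) * gradNorm v (Fin.cons t x) * (jb (rad x))⁻¹ ≤
      4 * √C * (jb t)⁻¹ * (√(∫ x, (1 + s (rsq x)) * timeSlice t (hessSq u) x) *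
        √(∫ x, ((jb (rad x) ^ 2)⁻¹ + m (rsq x)) * timeSlice t (gradSq v) x)) := by
  have hR : Continuous fun x : Sp => jb (rad x) := continuous_jb.comp continuous_rad
  have hleft : IsCc fun x : Sp => d2abs u (Fin.cons t x) * gradNorm v (Fin.cons t x) :=
    isCc_timeSlice ((isCc_gradSq hv hvc).sqrt.mul_left
      (IsCc.sum fun a => IsCc.sum fun b => (isCc_partialDeriv₂ hu huc a b).abs).continuous)
  have hF : IsCc fun x : Sp => (1 + s (rsq x)) * timeSlice t (hessSq u) x :=
    (isCc_timeSlice (isCc_hessSq hu huc)).mul_left (continuous_const.add hs_cont)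
  have hG : IsCc fun x : Sp => ((jb (rad x) ^ 2)⁻¹ + m (rsq x)) * timeSlice t (gradSq v) x :=
    (isCc_timeSlice (isCc_gradSq hv hvc)).mul_left
      (((hR.pow 2).inv₀ fun x => (pow_pos (jb_pos _) 2).ne').add hm_cont)
  have cauchy_schwarz := hF.sqrt.integral_mul_le_sqrt_mul_sqrt (μ := volume) hG.sqrt
    (fun x => sqrt_nonneg _) (fun x => sqrt_nonneg _)
  have hF₀ (x : Sp) : 0 ≤ (1 + s (rsq x)) * timeSlice t (hessSq u) x :=
    mul_nonneg (add_nonneg zero_le_one (hs _ rsq_nonneg)) hessSq_nonneg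
  have hG₀ (x : Sp) : 0 ≤ ((jb (rad x) ^ 2)⁻¹ + m (rsq x)) * timeSlice t (gradSq v) x :=
    mul_nonneg (add_nonneg (by positivity) (hm _ rsq_nonneg)) gradSq_nonneg
  simp only [sq_sqrt (hF₀ _), sq_sqrt (hG₀ _)] at cauchy_schwarz
  refine le_trans ?_ (mul_le_mul_of_nonneg_left cauchy_schwarz
    (mul_nonneg (by positivity) (inv_nonneg.2 (jb_pos t).le)))
  rw [← integral_const_mul]
  exact integral_mono (hleft.mul_right (hR.inv₀ fun x => (jb_pos _).ne')).integrable
    ((hG.sqrt.mul_left hF.sqrt.continuous).integrable.const_mul _) fun x =>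
      d2abs_mul_gradNorm_mul_inv_jb_le hC (hs _ rsq_nonneg) (hm _ rsq_nonneg) (h _ rsq_nonneg) _

theorem sqrt_integral_one_add_coneWeight_mul_hessSq_le (c : ℝ) (hu : ContDiff ℝ 3 u)
    (huc : HasCompactSupport u) (ht : 0 ≤ t) :
    √(∫ x, (1 + coneWeight c t (rsq x)) * timeSlice t (hessSq u) x) ≤
      26 * (1 + c ^ 2) * Qfac c u t := by
  have hQ := Qfac_nonneg (c := c) (u := u) (t := t)
  refine sqrt_le_iff.2 ⟨by positivity, ?_⟩
  calc ∫ x, (1 + coneWeight c t (rsq x)) * timeSlice t (hessSq u) x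
      ≤ 93 * (2 * (3 : ℕ) + 1) * (1 + c ^ 2) ^ 2 * ∫ x, timeSlice t (energyDensity c u) x :=
        integral_one_add_coneWeight_mul_hessSq_le c t hu huc
    _ ≤ 93 * (2 * (3 : ℕ) + 1) * (1 + c ^ 2) ^ 2 * Qfac c u t ^ 2 := by
        gcongr
        exact integral_energyDensity_le (hu.of_le (by norm_num)) huc ht
    _ ≤ (26 * (1 + c ^ 2) * Qfac c u t) ^ 2 := by
        push_cast
        nlinarith [sq_nonneg ((1 + c ^ 2) * Qfac c u t)]

theorem jb_rpow_neg_three_halves (t : ℝ) : jb t ^ (-(3 : ℝ) / 2) = (jb t)⁻¹ / √(jb t) := by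
  rw [show -(3 : ℝ) / 2 = -1 - 1 / 2 by norm_num, rpow_sub (jb_pos t), rpow_neg_one, sqrt_eq_rpow]

theorem integral_morawetzWeight_mul_gradSq_le_sq (c a : ℝ) (hv : ContDiff ℝ 3 v)
    (hvc : HasCompactSupport v) (ht : 0 ≤ t) :
    ∫ x, morawetzWeight c t a (jb t) (rsq x) * timeSlice t (gradSq v) x ≤
      (73 * (1 + c ^ 2) ^ 2 / √(jb t) * Qfac c v t) ^ 2 := by
  have hT := jb_pos t
  calc ∫ x, morawetzWeight c t a (jb t) (rsq x) * timeSlice t (gradSq v) x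
      ≤ 94 * (2 * (3 : ℕ) + 1) * (5 + (3 : ℕ)) * (1 + c ^ 2) ^ 4 / jb t *
          ∫ x, timeSlice t (energyDensity c v) x :=
        integral_morawetzWeight_mul_gradSq_le c t a hT hv hvc
    _ ≤ 73 ^ 2 * (1 + c ^ 2) ^ 4 / jb t * Qfac c v t ^ 2 := by
        gcongr
        · exact integral_nonneg fun x => energyDensity_nonneg
        · norm_num
        · exact integral_energyDensity_le (hv.of_le (by norm_num)) hvc ht
    _ = (73 * (1 + c ^ 2) ^ 2 / √(jb t) * Qfac c v t) ^ 2 := by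
        rw [mul_pow, div_pow, sq_sqrt hT.le]
        ring

theorem sqrt_integral_add_morawetzWeight_mul_gradSq_le (c a : ℝ) (hv : ContDiff ℝ 3 v)
    (hvc : HasCompactSupport v) (ht : 0 ≤ t) :
    √(∫ x, ((jb (rad x) ^ 2)⁻¹ + morawetzWeight c t a (jb t) (rsq x)) *
        timeSlice t (gradSq v) x) ≤
      √(∫ x, timeSlice t (gradSq v) x / jb (rad x) ^ 2) +
        73 * (1 + c ^ 2) ^ 2 / √(jb t) * Qfac c v t := by
  have hT := jb_pos t
  have hQ := Qfac_nonneg (c := c) (u := v) (t := t)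
  have hgrad := isCc_timeSlice (t := t) (isCc_gradSq (hv.of_le (by norm_num)) hvc)
  have hR : Continuous fun x : Sp => (jb (rad x) ^ 2)⁻¹ :=
    ((continuous_jb.comp continuous_rad).pow 2).inv₀ fun x => (pow_pos (jb_pos _) 2).ne'
  have hlocal : 0 ≤ ∫ x, timeSlice t (gradSq v) x / jb (rad x) ^ 2 :=
    integral_nonneg fun x => div_nonneg gradSq_nonneg (sq_nonneg _)
  have morawetz_le := integral_morawetzWeight_mul_gradSq_le_sq c a hv hvc ht
  simp only [add_mul]
  rw [integral_add (hgrad.mul_left hR).integrable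
    (hgrad.mul_left (continuous_morawetzWeight_rsq c t a hT)).integrable]
  simp only [inv_mul_eq_div]
  set N := √(∫ x, timeSlice t (gradSq v) x / jb (rad x) ^ 2)
  set Q := 73 * (1 + c ^ 2) ^ 2 / √(jb t) * Qfac c v t
  have hQ₀ : 0 ≤ Q := by positivity
  refine sqrt_le_iff.2 ⟨by positivity, ?_⟩
  nlinarith [sq_sqrt hlocal, mul_nonneg (sqrt_nonneg _ : 0 ≤ N) hQ₀]

end DifferentSpeeds

theorem stmt_14_general (c₁ c₂ : ℝ) (hc₁ : c₁ ≠ 0) (hne : c₁ ^ 2 ≠ c₂ ^ 2) :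
    ∃ C : ℝ, 0 < C ∧
      ∀ (u v : Pt → ℝ), ContDiff ℝ 3 u → HasCompactSupport u →
        ContDiff ℝ 3 v → HasCompactSupport v →
        ∀ t : ℝ, 0 ≤ t →
          ∫ x : Sp, d2abs u (Fin.cons t x) * gradNorm v (Fin.cons t x) * (jb (rad x))⁻¹
            ≤ C * (jb t)⁻¹ * Qfac c₁ u t *
                (∫ x : Sp, (∑ a, (pd a v (Fin.cons t x)) ^ 2) / jb (rad x) ^ 2) ^ ((1:ℝ)/2)
              + C * (jb t) ^ (-(3:ℝ)/2) * Qfac c₁ u t * Qfac c₂ v t := by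
  obtain ⟨C, hC, weights⟩ := exists_one_add_sq_le hc₁ hne
  refine ⟨4 * √C * (26 * (1 + c₁ ^ 2)) * (73 * (1 + c₂ ^ 2) ^ 2), by positivity,
    fun u v hu huc hv hvc t ht => ?_⟩
  have cauchy_schwarz := integral_d2abs_mul_gradNorm_mul_inv_jb_le hC.le
    (fun r => coneWeight_nonneg) (fun r => morawetzWeight_nonneg)
    (contDiff_coneWeight_rsq (m := 0) c₁ t).continuous
    (continuous_morawetzWeight_rsq c₂ t (c₁ ^ 2 * t ^ 2) (jb_pos t)) (weights t)
    (hu.of_le (by norm_num)) huc (hv.of_le (by norm_num)) hvc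
  have hess_le := sqrt_integral_one_add_coneWeight_mul_hessSq_le c₁ hu huc ht
  have grad_le := sqrt_integral_add_morawetzWeight_mul_gradSq_le c₂ (c₁ ^ 2 * t ^ 2) hv hvc ht
  have hT := jb_pos t
  have hQ := Qfac_nonneg (c := c₁) (u := u) (t := t)
  have hB : 1 ≤ 73 * (1 + c₂ ^ 2) ^ 2 := by nlinarith [sq_nonneg c₂, sq_nonneg (c₂ ^ 2)]
  rw [jb_rpow_neg_three_halves, ← sqrt_eq_rpow]
  refine (cauchy_schwarz.trans (mul_le_mul_of_nonneg_left (mul_le_mul hess_le grad_le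
    (sqrt_nonneg _) (by positivity)) (by positivity))).trans ?_
  rw [mul_add, mul_add]
  refine add_le_add ?_ (le_of_eq (by ring))
  refine (le_mul_of_one_le_right (by positivity) hB).trans_eq ?_
  change _ = _ * √(∫ x, timeSlice t (gradSq v) x / jb (rad x) ^ 2)
  ring

/-- Corollary 3.3 of the paper: the bound for interactions of waves with
different speeds `c₁ ≠ c₂`. -/
theorem stmt_14 (c₁ c₂ : ℝ) (hc₁ : 0 < c₁) (hc₂ : 0 < c₂) (hne : c₁ ≠ c₂) :
    ∃ C : ℝ, 0 < C ∧
      ∀ (u v : Pt → ℝ), ContDiff ℝ (⊤ : ℕ∞) u → HasCompactSupport u →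
        ContDiff ℝ (⊤ : ℕ∞) v → HasCompactSupport v →
        ∀ t : ℝ, 0 ≤ t →
          ∫ x : Sp, d2abs u (Fin.cons t x) * gradNorm v (Fin.cons t x) * (jb (rad x))⁻¹
            ≤ C * (jb t)⁻¹ * Qfac c₁ u t *
                (∫ x : Sp, (∑ a, (pd a v (Fin.cons t x)) ^ 2) / jb (rad x) ^ 2) ^ ((1:ℝ)/2)
              + C * (jb t) ^ (-(4:ℝ)/3) * Qfac c₁ u t * Qfac c₂ v t := by
  obtain ⟨C, hC, bound⟩ := stmt_14_general c₁ c₂ hc₁.ne'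
    fun h => hne ((pow_left_inj₀ hc₁.le hc₂.le two_ne_zero).1 h)
  refine ⟨C, hC, fun u v hu huc hv hvc t ht => (bound u v (hu.of_le (by norm_cast)) huc
    (hv.of_le (by norm_cast)) hvc t ht).trans ?_⟩
  have decay_le := rpow_le_rpow_of_exponent_le (one_le_jb t) (by norm_num : -(3:ℝ)/2 ≤ -(4:ℝ)/3)
  have hQu := Qfac_nonneg (c := c₁) (u := u) (t := t)
  have hQv := Qfac_nonneg (c := c₂) (u := v) (t := t)
  gcongr
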